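/- Let 0 < α ≤ 1 and 2 < p < ∞. Then there exists a constant C > 0 such that for every j ∈ ℤ_+ and every f ∈ L¹_loc(ℝⁿ), ‖S_{α,2^j}(f)‖_{L^p(ℝⁿ)} ≤ C · 2^{jn/2} ‖S_α(f)‖_{L^p(ℝⁿ)}. -/

import Mathlib

/-!
Put `F(y,t) = A_α(f)(y,t)² / t^{n+1}`, so that `S_{α,β}(f)(x)²` is the integral of `F` over the cone
of aperture `β` at `x` (`coneInt`). The inequality is the change of aperture for such cone integrals
in the exponent `q = p/2 > 1`, and it holds for every nonnegative `F`. Indeed, for `h ≥ 0`, Tonelli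
gives `∫ coneInt F β · h = ∫ F(y,t) (∫_{B(y,βt)} h) dy dt`. For each `x ∈ B(y,t)` the inner integral
is at most `C (βt)ⁿ M h(x)`; averaging over such `x` yields
`∫ coneInt F β · h ≤ C βⁿ ∫ coneInt F 1 · M h` (`lintegral_coneInt_mul_le`). The boundedness of the
maximal function on the dual exponent (`maxF_strong`) and duality give
`‖coneInt F β‖_q ≤ C βⁿ ‖coneInt F 1‖_q` (`coneInt_aperture`), and square roots produce `β^{n/2}`.

In `Salpha` the integral is a Bochner integral, which is `0` wherever the cone integral diverges, so
that a small right-hand side does not by itself control the cone integrals. This is settled by a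
dichotomy. If `coneInt F 1 = ∞` at every point, then so is `coneInt F (2ʲ)`, and the left-hand side
vanishes. Otherwise `coneInt F 1` is finite at some point `x₀`, and then it is finite almost
everywhere (`ae_coneInt_lt_top_of_exists`), so that `S_α(f)² = coneInt F 1` almost everywhere. To
see this, the part of the cone at `x` above a height `R > |x - x₀|` is compared with the cone at
`x₀` by doubling `t` (`coneInt_high`), while the part below `R` only involves `f` on a ball, where
`f` is integrable.

It remains to see that the square function of an integrable `f` is finite almost everywhere
(`ae_coneInt_lt_top`). Let `G` be a set on which all averages of `|f|` are at most a multiple of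
`λ`. The integral of `coneInt F 1` over `G` is bounded by a sum over lattice points `i = (k, m)` with
centres `yᵢ = 2ᵏ m` and radii `tᵢ ≈ 2ᵏ` whose balls meet `G` (`box_bound`). With nearly extremal
kernels `gᵢ` and `aᵢ = ∫ gᵢ f` the sum is comparable to
`X = ∑ aᵢ² tᵢⁿ = ∫ f h`, where `h = ∑ aᵢ tᵢⁿ gᵢ`. The coefficients satisfy `|aᵢ| ≤ C λ`, so `h`
oscillates by at most `C λ` at the scale `ρ(z) ≈ dist(z, G)` (`osc`); hence `|f|` may be replaced by
its average at the scale `ρ`, which is at most `C λ` (`lintegral_le_avF`, `avF_le`). Almost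
orthogonality of the kernels gives `∫ h² ≤ C X` (`schur`), and the inequality between arithmetic and
geometric means absorbs this into `X`, leaving `X ≤ C λ ‖f‖₁` (`core`).
-/

open MeasureTheory Metric Set

noncomputable section

/-- `ℝⁿ` as a Euclidean space. -/
abbrev Rn (n : ℕ) := EuclideanSpace ℝ (Fin n)

/-- The family `𝒞_α` of real functions supported in the closed unit ball, with vanishing
integral, satisfying the Hölder condition `|φ x - φ x'| ≤ |x - x'|^α`. -/
def Calpha (n : ℕ) (α : ℝ) : Set (Rn n → ℝ) :=
  {φ | (∀ x : Rn n, 1 < ‖x‖ → φ x = 0) ∧ ((∫ x, φ x) = 0) ∧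
    ∀ x x' : Rn n, |φ x - φ x'| ≤ ‖x - x'‖ ^ α}

/-- `A_α(f)(y,t) = sup_{φ ∈ 𝒞_α} |(f * φ_t)(y)|`, where `φ_t(x) = t⁻ⁿ φ(x/t)`. -/
def Aalpha {n : ℕ} (α : ℝ) (f : Rn n → ℝ) (y : Rn n) (t : ℝ) : ℝ :=
  ⨆ φ ∈ Calpha n α, |∫ z, (t ^ n)⁻¹ * φ (t⁻¹ • (y - z)) * f z|

/-- The intrinsic square function `S_{α,β}` of aperture `β`. -/
def Salpha {n : ℕ} (α β : ℝ) (f : Rn n → ℝ) (x : Rn n) : ℝ :=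
  Real.sqrt (∫ p in {p : Rn n × ℝ | 0 < p.2 ∧ dist x p.1 < β * p.2},
    Aalpha α f p.1 p.2 ^ 2 / p.2 ^ (n + 1))

/-- The intrinsic `g^*_λ` function. -/
def gstarAlpha {n : ℕ} (α lam : ℝ) (f : Rn n → ℝ) (x : Rn n) : ℝ :=
  Real.sqrt (∫ p in {p : Rn n × ℝ | 0 < p.2},
    (p.2 / (p.2 + dist x p.1)) ^ (lam * n) * Aalpha α f p.1 p.2 ^ 2 / p.2 ^ (n + 1))

/-- The intrinsic Littlewood–Paley `g`-function. -/
def gAlpha {n : ℕ} (α : ℝ) (f : Rn n → ℝ) (x : Rn n) : ℝ :=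
  Real.sqrt (∫ t in Ioi (0 : ℝ), Aalpha α f x t ^ 2 / t)

/-- The commutator kernel
`sup_{φ ∈ 𝒞_α} |∫ (b x - b z) φ_t (y - z) f z dz|`. -/
def commAalpha {n : ℕ} (α : ℝ) (b f : Rn n → ℝ) (x y : Rn n) (t : ℝ) : ℝ :=
  ⨆ φ ∈ Calpha n α, |∫ z, (b x - b z) * ((t ^ n)⁻¹ * φ (t⁻¹ • (y - z))) * f z|

/-- The commutator `[b, S_α]`. -/
def commS {n : ℕ} (α : ℝ) (b f : Rn n → ℝ) (x : Rn n) : ℝ :=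
  Real.sqrt (∫ p in {p : Rn n × ℝ | 0 < p.2 ∧ dist x p.1 < p.2},
    commAalpha α b f x p.1 p.2 ^ 2 / p.2 ^ (n + 1))

/-- The commutator `[b, g^*_{λ,α}]`. -/
def commGstar {n : ℕ} (α lam : ℝ) (b f : Rn n → ℝ) (x : Rn n) : ℝ :=
  Real.sqrt (∫ p in {p : Rn n × ℝ | 0 < p.2},
    (p.2 / (p.2 + dist x p.1)) ^ (lam * n) * commAalpha α b f x p.1 p.2 ^ 2 / p.2 ^ (n + 1))

/-- The commutator `[b, g_α]`. -/
def commG {n : ℕ} (α : ℝ) (b f : Rn n → ℝ) (x : Rn n) : ℝ :=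
  Real.sqrt (∫ t in Ioi (0 : ℝ), commAalpha α b f x x t ^ 2 / t)

/-- `A` is an admissible constant for `f` in the generalized Morrey space `L^{p,Φ}`:
`∫_{B(x₀,r)} |f|^p ≤ A^p Φ(r)` for all balls.  The Morrey norm `‖f‖_{L^{p,Φ}}` is the least
such `A ≥ 0`, and `f ∈ L^{p,Φ}` iff some such `A` exists. -/
def MorreyBound {n : ℕ} (p : ℝ) (Φ : ℝ → ℝ) (f : Rn n → ℝ) (A : ℝ) : Prop :=
  ∀ (x₀ : Rn n) (r : ℝ), 0 < r → (∫ x in ball x₀ r, |f x| ^ p) ≤ A ^ p * Φ r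

/-- `A` is an admissible constant for `g` in the weak space `WL^{1,Φ}`:
`σ |{x ∈ B(x₀,r) : g x > σ}| ≤ A Φ(r)` for all balls and all `σ > 0`. -/
def WeakMorreyBound {n : ℕ} (Φ : ℝ → ℝ) (g : Rn n → ℝ) (A : ℝ) : Prop :=
  ∀ (x₀ : Rn n) (r : ℝ), 0 < r → ∀ σ : ℝ, 0 < σ →
    σ * (volume {x ∈ ball x₀ r | σ < g x}).toReal ≤ A * Φ r

/-- Average of `b` over the ball `B(x₀,r)`. -/
def ballAvg {n : ℕ} (b : Rn n → ℝ) (x₀ : Rn n) (r : ℝ) : ℝ :=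
  (volume (ball x₀ r)).toReal⁻¹ * ∫ y in ball x₀ r, b y

/-- `b ∈ BMO(ℝⁿ)`. -/
def IsBMO {n : ℕ} (b : Rn n → ℝ) : Prop :=
  LocallyIntegrable b volume ∧ ∃ K : ℝ, ∀ (x₀ : Rn n) (r : ℝ), 0 < r →
    (∫ x in ball x₀ r, |b x - ballAvg b x₀ r|) ≤ K * (volume (ball x₀ r)).toReal

/-- The Hardy–Littlewood maximal function. -/
def hlMaximal {n : ℕ} (g : Rn n → ℝ) (x : Rn n) : ℝ :=
  ⨆ (x₀ : Rn n) (r : ℝ), ⨆ (_ : 0 < r ∧ x ∈ ball x₀ r),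
    (volume (ball x₀ r)).toReal⁻¹ * ∫ y in ball x₀ r, |g y|

/-! ### The dyadic maximal function -/

/-- The volume of the unit ball of `ℝⁿ`. -/
def ballVol (n : ℕ) : ENNReal := volume (ball (0 : Rn n) 1)

lemma ballVol_pos (n : ℕ) : 0 < ballVol n := measure_ball_pos _ _ one_pos

lemma ballVol_ne_top (n : ℕ) : ballVol n ≠ ⊤ := measure_ball_lt_top.ne

lemma vol_ball {n : ℕ} (x : Rn n) {r : ℝ} (hr : 0 < r) :
    volume (ball x r) = ENNReal.ofReal (r ^ n) * ballVol n := by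
  rw [Measure.addHaar_ball_of_pos _ _ hr]; simp [ballVol]

lemma vol_closedBall {n : ℕ} (x : Rn n) {r : ℝ} (hr : 0 < r) :
    volume (closedBall x r) = ENNReal.ofReal (r ^ n) * ballVol n := by
  rw [Measure.addHaar_closedBall _ _ hr.le]; simp [ballVol]

/-- The centred Hardy–Littlewood maximal function, with dyadic radii and with averages normalised
by `rⁿ` instead of the volume of the ball. -/
def maxF {n : ℕ} (h : Rn n → ENNReal) (x : Rn n) : ENNReal :=
  ⨆ k : ℤ, (∫⁻ y in ball x ((2 : ℝ) ^ k), h y) / ENNReal.ofReal (((2 : ℝ) ^ k) ^ n)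

lemma measurable_lintegral_ball {n : ℕ} {h : Rn n → ENNReal} (hh : Measurable h) (r : ℝ) :
    Measurable fun x => ∫⁻ y in ball x r, h y := by
  have : ∀ x, ∫⁻ y in ball x r, h y =
      ∫⁻ y, {p : Rn n × Rn n | dist p.2 p.1 < r}.indicator (fun p => h p.2) (x, y) := by
    intro x; rw [← lintegral_indicator measurableSet_ball]; rfl
  simp_rw [this]
  apply Measurable.lintegral_prod_right'
  exact (hh.comp measurable_snd).indicator (isOpen_lt (by fun_prop) (by fun_prop)).measurableSet

lemma measurable_maxF {n : ℕ} {h : Rn n → ENNReal} (hh : Measurable h) : Measurable (maxF h) :=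
  Measurable.iSup fun _ => (measurable_lintegral_ball hh _).div_const _

lemma lintegral_ball_le_maxF {n : ℕ} (h : Rn n → ENNReal) (x : Rn n) {r : ℝ} (hr : 0 < r) :
    ∫⁻ y in ball x r, h y ≤ ENNReal.ofReal ((2 * r) ^ n) * maxF h x := by
  obtain ⟨k, hk1, hk2⟩ := exists_mem_Ico_zpow hr (one_lt_two (α := ℝ))
  have h2 : (2 : ℝ) ^ (k + 1) ≤ 2 * r := by
    rw [zpow_add_one₀ two_ne_zero]; linarith
  have hp : (0 : ℝ) < (2 : ℝ) ^ (k + 1) := by positivity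
  have hle := le_iSup (fun k : ℤ => (∫⁻ y in ball x ((2 : ℝ) ^ k), h y) /
    ENNReal.ofReal (((2 : ℝ) ^ k) ^ n)) (k + 1)
  rw [ENNReal.div_le_iff_le_mul (Or.inl (by simp; positivity)) (Or.inl ENNReal.ofReal_ne_top)]
    at hle
  calc ∫⁻ y in ball x r, h y ≤ ∫⁻ y in ball x ((2 : ℝ) ^ (k + 1)), h y :=
        lintegral_mono_set (ball_subset_ball hk2.le)
    _ ≤ _ := hle
    _ ≤ _ := by
        rw [mul_comm]; gcongr; rfl

/-- Weak type `(1,1)` of the maximal function, from the Vitali covering lemma. -/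
lemma maxF_weak {n : ℕ} (hn : 0 < n) {h : Rn n → ENNReal} {s : ℝ} (hs : 0 < s) :
    ENNReal.ofReal s * volume {x | ENNReal.ofReal s < maxF h x} ≤
      ENNReal.ofReal (5 ^ n) * ballVol n * ∫⁻ y, h y := by
  rcases eq_or_ne (∫⁻ y, h y) ⊤ with hI | hI
  · rw [hI, ENNReal.mul_top]
    · exact le_top
    · simp [(ballVol_pos n).ne']
  set T := {x | ENNReal.ofReal s < maxF h x} with hT
  have hex : ∀ x, ∃ k : ℤ, x ∈ T → ENNReal.ofReal s * ENNReal.ofReal (((2 : ℝ) ^ k) ^ n) <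
      ∫⁻ y in ball x ((2 : ℝ) ^ k), h y := by
    intro x
    by_cases hx : x ∈ T
    · obtain ⟨k, hk⟩ := lt_iSup_iff.1 (show ENNReal.ofReal s < maxF h x from hx)
      exact ⟨k, fun _ => (ENNReal.lt_div_iff_mul_lt (Or.inl (by simp; positivity))
        (Or.inl ENNReal.ofReal_ne_top)).1 hk⟩
    · exact ⟨0, fun h => absurd h hx⟩
  choose k hk using hex
  have hR : ∀ a ∈ T, (2 : ℝ) ^ k a ≤ 1 + (∫⁻ y, h y).toReal / s := by
    intro a ha
    by_contra! hlt
    have h0 : 0 ≤ (∫⁻ y, h y).toReal / s := by positivity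
    have h1 : (2 : ℝ) ^ k a ≤ ((2 : ℝ) ^ k a) ^ n := le_self_pow₀ (by linarith) hn.ne'
    have h2 := (hk a ha).trans_le (setLIntegral_le_lintegral _ _)
    rw [← ENNReal.ofReal_mul hs.le, ENNReal.ofReal_lt_iff_lt_toReal (by positivity) hI] at h2
    have h3 : (∫⁻ y, h y).toReal / s < ((2 : ℝ) ^ k a) ^ n := by linarith
    rw [div_lt_iff₀ hs] at h3
    linarith
  obtain ⟨u, huT, hdisj, hcov⟩ := Vitali.exists_disjoint_subfamily_covering_enlargement_closedBall
    T id (fun a => (2 : ℝ) ^ k a) _ hR 5 (by norm_num)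
  have hdisj' : u.PairwiseDisjoint fun a => ball a ((2 : ℝ) ^ k a) :=
    fun a ha b hb hab => (hdisj ha hb hab).mono ball_subset_closedBall ball_subset_closedBall
  have hcount : u.Countable := hdisj'.countable_of_isOpen (fun _ _ => isOpen_ball)
    (fun a _ => ⟨a, mem_ball_self (by positivity)⟩)
  have hsub : T ⊆ ⋃ b ∈ u, closedBall b (5 * (2 : ℝ) ^ k b) := by
    intro a ha
    obtain ⟨b, hb, hab⟩ := hcov a ha
    exact mem_biUnion hb (hab (mem_closedBall_self (by positivity)))
  calc ENNReal.ofReal s * volume T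
      ≤ ENNReal.ofReal s * ∑' b : u, volume (closedBall (b : Rn n) (5 * (2 : ℝ) ^ k b)) := by
        gcongr
        exact (measure_mono hsub).trans (measure_biUnion_le _ hcount _)
    _ = ∑' b : u, ENNReal.ofReal (5 ^ n) * ballVol n *
          (ENNReal.ofReal s * ENNReal.ofReal (((2 : ℝ) ^ k b) ^ n)) := by
        rw [← ENNReal.tsum_mul_left]
        congr 1; ext b
        rw [vol_closedBall _ (by positivity), mul_pow, ENNReal.ofReal_mul (by positivity)]
        ring
    _ ≤ ∑' b : u, ENNReal.ofReal (5 ^ n) * ballVol n *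
          ∫⁻ y in ball (b : Rn n) ((2 : ℝ) ^ k b), h y := by
        gcongr with b
        exact (hk b (huT b.2)).le
    _ = ENNReal.ofReal (5 ^ n) * ballVol n *
          ∫⁻ y in ⋃ b ∈ u, ball b ((2 : ℝ) ^ k b), h y := by
        rw [ENNReal.tsum_mul_left, lintegral_biUnion hcount (fun _ _ => measurableSet_ball) hdisj']
    _ ≤ _ := by gcongr; exact Measure.restrict_le_self

/-- A function with finite integral has an almost everywhere finite maximal function. -/
lemma ae_maxF_lt_top {n : ℕ} (hn : 0 < n) {h : Rn n → ENNReal} (hI : ∫⁻ y, h y ≠ ⊤) :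
    ∀ᵐ x, maxF h x < ⊤ := by
  rw [ae_iff]
  set c := ENNReal.ofReal (5 ^ n) * ballVol n * ∫⁻ y, h y with hc
  have hct : c ≠ ⊤ := ENNReal.mul_ne_top (ENNReal.mul_ne_top ENNReal.ofReal_ne_top
    (ballVol_ne_top n)) hI
  by_contra h0
  have hle : ∀ s : ℝ, 0 < s → ENNReal.ofReal s * volume {x | ¬ maxF h x < ⊤} ≤ c := by
    intro s hs
    refine le_trans ?_ (maxF_weak hn hs)
    refine mul_le_mul_right (measure_mono fun x hx => ?_) _
    simp only [not_lt, top_le_iff, mem_ofPred_eq] at hx ⊢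
    rw [hx]; exact ENNReal.ofReal_lt_top
  have hfin : volume {x | ¬ maxF h x < ⊤} ≠ ⊤ := by
    intro ht
    have := hle 1 one_pos
    rw [ht] at this; simp at this; exact hct this
  have h1 := hle ((c / volume {x | ¬ maxF h x < ⊤}).toReal + 1) (by positivity)
  have hd : c / volume {x | ¬ maxF h x < ⊤} ≠ ⊤ := (ENNReal.div_lt_top hct h0).ne
  rw [ENNReal.ofReal_add (by positivity) zero_le_one, ENNReal.ofReal_toReal hd, add_mul,
    ENNReal.div_mul_cancel h0 hfin] at h1
  simp only [ENNReal.ofReal_one, one_mul] at h1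
  exact h0 (by simpa using (ENNReal.add_le_add_iff_left hct).1 (h1.trans_eq (add_zero c).symm))

lemma lintegral_rpow_Ioi {r a : ℝ} (hr : 1 < r) (ha : 0 ≤ a) :
    ∫⁻ s in Ioi (0 : ℝ), {s : ℝ | s < a}.indicator (fun s => ENNReal.ofReal (s ^ (r - 2))) s =
      ENNReal.ofReal (a ^ (r - 1) / (r - 1)) := by
  rw [show {s : ℝ | s < a} = Iio a from rfl, lintegral_indicator measurableSet_Iio, Measure.restrict_restrict measurableSet_Iio,
    show Iio a ∩ Ioi 0 = Ioo 0 a by ext; simp [and_comm], setLIntegral_congr Ioo_ae_eq_Ioc,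
    ← ofReal_integral_eq_lintegral_ofReal, ← intervalIntegral.integral_of_le ha,
    integral_rpow (Or.inl (by linarith))]
  · rw [show r - 2 + 1 = r - 1 by ring, Real.zero_rpow (by linarith), sub_zero]
  · exact (intervalIntegrable_iff_integrableOn_Ioc_of_le ha).1
      (intervalIntegral.intervalIntegrable_rpow' (by linarith))
  · filter_upwards [ae_restrict_mem measurableSet_Ioc] with s hs
    exact Real.rpow_nonneg hs.1.le _

/-- Only the part of `h` above a multiple of `s` contributes to the level set `{s < M h}`. -/
lemma maxF_level {n : ℕ} (hn : 0 < n) {h : Rn n → ENNReal} {s : ℝ} (hs : 0 < s) :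
    volume {x | ENNReal.ofReal s < maxF h x} ≤
      ENNReal.ofReal (2 / s) * (ENNReal.ofReal (5 ^ n) * ballVol n) *
        ∫⁻ x, {x | ENNReal.ofReal (s / (2 * (ballVol n).toReal)) < h x}.indicator h x := by
  set w := (ballVol n).toReal with hw
  have hw0 : 0 < w := ENNReal.toReal_pos (ballVol_pos n).ne' (ballVol_ne_top n)
  set h1 := {x | ENNReal.ofReal (s / (2 * w)) < h x}.indicator h with hh1
  have hle : ∀ x, h x ≤ h1 x + ENNReal.ofReal (s / (2 * w)) := by
    intro x
    by_cases hx : ENNReal.ofReal (s / (2 * w)) < h x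
    · rw [hh1, indicator_of_mem (by exact hx)]; exact le_self_add
    · exact (not_lt.1 hx).trans le_add_self
  have hM : ∀ x, maxF h x ≤ maxF h1 x + ENNReal.ofReal (s / 2) := by
    intro x
    refine iSup_le fun k => ?_
    refine le_trans ?_ (add_le_add_left (le_iSup (fun k : ℤ => (∫⁻ y in ball x ((2 : ℝ) ^ k), h1 y) /
      ENNReal.ofReal (((2 : ℝ) ^ k) ^ n)) k) _)
    have hk : (0 : ℝ) < (2 : ℝ) ^ k := by positivity
    rw [ENNReal.div_le_iff_le_mul (Or.inl (by simp; positivity)) (Or.inl ENNReal.ofReal_ne_top),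
      add_mul, ENNReal.div_mul_cancel (by simp; positivity) ENNReal.ofReal_ne_top]
    refine (lintegral_mono hle).trans_eq ?_
    rw [lintegral_add_right _ measurable_const, setLIntegral_const, vol_ball _ hk,
      ← ENNReal.ofReal_toReal (ballVol_ne_top n), ← hw, ← ENNReal.ofReal_mul (by positivity),
      ← ENNReal.ofReal_mul (by positivity), ← ENNReal.ofReal_mul (by positivity)]
    congr 2
    field_simp
  have hsub : {x | ENNReal.ofReal s < maxF h x} ⊆ {x | ENNReal.ofReal (s / 2) < maxF h1 x} := by
    intro x hx
    by_contra hx'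
    have h2 := (hM x).trans (add_le_add_left (not_lt.1 hx') _)
    rw [← ENNReal.ofReal_add (by positivity) (by positivity), add_halves] at h2
    exact absurd hx (not_lt.2 h2)
  have hwk := maxF_weak hn (h := h1) (half_pos hs)
  calc _ ≤ volume {x | ENNReal.ofReal (s / 2) < maxF h1 x} := measure_mono hsub
    _ = ENNReal.ofReal (2 / s) * (ENNReal.ofReal (s / 2) *
          volume {x | ENNReal.ofReal (s / 2) < maxF h1 x}) := by
        rw [← mul_assoc, ← ENNReal.ofReal_mul (by positivity),
          show 2 / s * (s / 2) = 1 by field_simp]; simp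
    _ ≤ _ := by rw [mul_assoc]; gcongr

/-- Strong type `(r,r)` of the maximal function, by Marcinkiewicz interpolation. -/
lemma maxF_strong {n : ℕ} (hn : 0 < n) {r : ℝ} (hr : 1 < r) :
    ∃ C : ENNReal, C ≠ ⊤ ∧ ∀ (h : Rn n → ENNReal), Measurable h →
      (∃ K : ENNReal, K ≠ ⊤ ∧ ∀ x, h x ≤ K) →
      ∫⁻ x, maxF h x ^ r ≤ C * ∫⁻ x, h x ^ r := by
  set w := (ballVol n).toReal with hw
  have hw0 : 0 < w := ENNReal.toReal_pos (ballVol_pos n).ne' (ballVol_ne_top n)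
  set B := ENNReal.ofReal (5 ^ n) * ballVol n with hB
  have hBt : B ≠ ⊤ := ENNReal.mul_ne_top ENNReal.ofReal_ne_top (ballVol_ne_top n)
  refine ⟨ENNReal.ofReal r * (ENNReal.ofReal 2 * B * ENNReal.ofReal ((2 * w) ^ (r - 1) / (r - 1))),
    by finiteness, ?_⟩
  rintro h hh ⟨K, hK, hhK⟩
  have hht : ∀ x, h x ≠ ⊤ := fun x => ((hhK x).trans_lt hK.lt_top).ne
  have hMt : ∀ x, maxF h x ≠ ⊤ := by
    intro x
    refine ne_top_of_le_ne_top (ENNReal.mul_ne_top hK (ballVol_ne_top n)) (iSup_le fun k => ?_)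
    have hk : (0 : ℝ) < (2 : ℝ) ^ k := by positivity
    rw [ENNReal.div_le_iff_le_mul (Or.inl (by simp; positivity)) (Or.inl ENNReal.ofReal_ne_top)]
    refine (lintegral_mono hhK).trans_eq ?_
    rw [setLIntegral_const, vol_ball _ hk]; ring
  have e1 : ∀ x, maxF h x ^ r = ENNReal.ofReal ((maxF h x).toReal ^ r) := fun x => by
    rw [← ENNReal.ofReal_rpow_of_nonneg ENNReal.toReal_nonneg (by linarith),
      ENNReal.ofReal_toReal (hMt x)]
  have e2 : ∀ s : ℝ, 0 < s → {x | s < (maxF h x).toReal} = {x | ENNReal.ofReal s < maxF h x} := by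
    intro s hs; ext x
    simp only [mem_ofPred_eq, ENNReal.ofReal_lt_iff_lt_toReal hs.le (hMt x)]
  have hmeas : MeasurableSet {p : ℝ × Rn n | ENNReal.ofReal (p.1 / (2 * w)) < h p.2} :=
    measurableSet_lt (by fun_prop) (hh.comp measurable_snd)
  calc ∫⁻ x, maxF h x ^ r
      = ENNReal.ofReal r * ∫⁻ s in Ioi 0, volume {x | s < (maxF h x).toReal} *
          ENNReal.ofReal (s ^ (r - 1)) := by
        simp_rw [e1]
        exact lintegral_rpow_eq_lintegral_meas_lt_mul _ (ae_of_all _ fun _ => ENNReal.toReal_nonneg)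
          (measurable_maxF hh).ennreal_toReal.aemeasurable (by linarith)
    _ ≤ ENNReal.ofReal r * ∫⁻ s in Ioi 0, ENNReal.ofReal 2 * B * ∫⁻ x,
          {p : ℝ × Rn n | ENNReal.ofReal (p.1 / (2 * w)) < h p.2}.indicator
            (fun p => h p.2 * ENNReal.ofReal (p.1 ^ (r - 2))) (s, x) := by
        refine mul_le_mul_right (setLIntegral_mono' measurableSet_Ioi fun s hs => ?_) _
        rw [e2 s hs]
        refine (mul_le_mul_left (maxF_level hn hs) _).trans_eq ?_
        have hs' : (0 : ℝ) < s := hs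
        have e3 : s ^ (r - 1) = s * s ^ (r - 2) := by
          rw [show r - 1 = 1 + (r - 2) by ring, Real.rpow_add hs', Real.rpow_one]
        have e4 : ∀ x, {p : ℝ × Rn n | ENNReal.ofReal (p.1 / (2 * w)) < h p.2}.indicator
            (fun p => h p.2 * ENNReal.ofReal (p.1 ^ (r - 2))) (s, x) =
            {x | ENNReal.ofReal (s / (2 * w)) < h x}.indicator h x *
              ENNReal.ofReal (s ^ (r - 2)) := by
          intro x; simp only [indicator, mem_ofPred_eq]; split_ifs <;> simp
        simp_rw [e4]
        rw [lintegral_mul_const' _ _ ENNReal.ofReal_ne_top, e3, ENNReal.ofReal_mul hs'.le,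
          ENNReal.ofReal_div_of_pos hs', ENNReal.div_eq_inv_mul]
        have : (ENNReal.ofReal s)⁻¹ * ENNReal.ofReal s = 1 :=
          ENNReal.inv_mul_cancel (by simpa using hs') ENNReal.ofReal_ne_top
        calc _ = ((ENNReal.ofReal s)⁻¹ * ENNReal.ofReal s) * (ENNReal.ofReal 2 * B *
              ((∫⁻ x, {x | ENNReal.ofReal (s / (2 * w)) < h x}.indicator h x) *
                ENNReal.ofReal (s ^ (r - 2)))) := by ring
          _ = _ := by rw [this, one_mul]
    _ = ENNReal.ofReal r * (ENNReal.ofReal 2 * B * ∫⁻ x, ∫⁻ s in Ioi 0,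
          {p : ℝ × Rn n | ENNReal.ofReal (p.1 / (2 * w)) < h p.2}.indicator
            (fun p => h p.2 * ENNReal.ofReal (p.1 ^ (r - 2))) (s, x)) := by
        rw [lintegral_const_mul' _ _ (by finiteness), lintegral_lintegral_swap]
        apply Measurable.aemeasurable
        exact Measurable.indicator (by fun_prop) hmeas
    _ = ENNReal.ofReal r * (ENNReal.ofReal 2 * B *
          ∫⁻ x, ENNReal.ofReal ((2 * w) ^ (r - 1) / (r - 1)) * h x ^ r) := by
        congr 3; ext x
        have e5 : ∀ s, {p : ℝ × Rn n | ENNReal.ofReal (p.1 / (2 * w)) < h p.2}.indicator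
            (fun p => h p.2 * ENNReal.ofReal (p.1 ^ (r - 2))) (s, x) = h x *
            {s : ℝ | s < 2 * w * (h x).toReal}.indicator
              (fun s => ENNReal.ofReal (s ^ (r - 2))) s := by
          intro s
          rcases eq_or_ne (h x) 0 with h0 | h0
          · simp [indicator, h0]
          have e6 : ENNReal.ofReal (s / (2 * w)) < h x ↔ s < 2 * w * (h x).toReal := by
            have hpos : 0 < (h x).toReal := ENNReal.toReal_pos h0 (hht x)
            rcases le_or_gt 0 s with hs | hs
            · rw [ENNReal.ofReal_lt_iff_lt_toReal (by positivity) (hht x),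
                div_lt_iff₀ (by positivity), mul_comm]
            · rw [ENNReal.ofReal_of_nonpos (div_nonpos_of_nonpos_of_nonneg hs.le (by positivity))]
              exact ⟨fun _ => hs.trans (by positivity), fun _ => pos_iff_ne_zero.2 h0⟩
          simp only [indicator, mem_ofPred_eq, e6]
          split_ifs <;> simp
        simp_rw [e5]
        rw [lintegral_const_mul' _ _ (hht x), lintegral_rpow_Ioi hr (by positivity)]
        rw [← ENNReal.ofReal_toReal (hht x), ENNReal.ofReal_rpow_of_nonneg (by positivity) (by linarith),
          ← ENNReal.ofReal_mul (by positivity), ← ENNReal.ofReal_mul (by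
            have : 0 < r - 1 := by linarith
            positivity), ENNReal.toReal_ofReal ENNReal.toReal_nonneg,
          Real.mul_rpow (by positivity) ENNReal.toReal_nonneg]
        congr 1
        rcases eq_or_ne (h x).toReal 0 with h0 | h0
        · rw [h0, Real.zero_rpow (by linarith : r ≠ 0)]; simp
        rw [show r = 1 + (r - 1) by ring, Real.rpow_add (by positivity), Real.rpow_one]
        ring_nf
    _ = _ := by
        rw [lintegral_const_mul' _ _ ENNReal.ofReal_ne_top]; ring

/-! ### The kernels and the extremal functional -/

lemma Calpha_eq_zero {n : ℕ} {α : ℝ} {φ : Rn n → ℝ} (hφ : φ ∈ Calpha n α) {x : Rn n}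
    (hx : 1 < ‖x‖) : φ x = 0 := hφ.1 x hx

lemma Calpha_holder {n : ℕ} {α : ℝ} {φ : Rn n → ℝ} (hφ : φ ∈ Calpha n α) (x x' : Rn n) :
    |φ x - φ x'| ≤ ‖x - x'‖ ^ α := hφ.2.2 x x'

lemma Calpha_bound {n : ℕ} (hn : 0 < n) {α : ℝ} (h1 : α ≤ 1) {φ : Rn n → ℝ}
    (hφ : φ ∈ Calpha n α) (x : Rn n) : |φ x| ≤ 3 := by
  by_cases hx : 1 < ‖x‖
  · rw [Calpha_eq_zero hφ hx]; norm_num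
  push Not at hx
  -- compare with a point at distance `3`, which lies outside the unit ball
  set e : Rn n := EuclideanSpace.single ⟨0, hn⟩ 3 with he
  have hne : ‖e‖ = 3 := by simp [he]
  have hx' : 1 < ‖x + e‖ := by
    have := norm_sub_le (x + e) x
    rw [add_sub_cancel_left, hne] at this; linarith
  have := Calpha_holder hφ x (x + e)
  rw [Calpha_eq_zero hφ hx', sub_zero, sub_add_cancel_left, norm_neg, hne] at this
  refine this.trans ?_
  calc (3 : ℝ) ^ α ≤ 3 ^ (1 : ℝ) := Real.rpow_le_rpow_of_exponent_le (by norm_num) h1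
    _ = 3 := by simp

lemma Calpha_continuous {n : ℕ} {α : ℝ} (h0 : 0 < α) {φ : Rn n → ℝ}
    (hφ : φ ∈ Calpha n α) : Continuous φ := by
  rw [continuous_iff_continuousAt]
  intro x
  rw [ContinuousAt, tendsto_iff_dist_tendsto_zero]
  have h : Filter.Tendsto (fun y => ‖y - x‖ ^ α) (nhds x) (nhds 0) := by
    have : Continuous fun y : Rn n => ‖y - x‖ ^ α :=
      (continuous_id.sub continuous_const).norm.rpow_const fun _ => Or.inr h0.le
    simpa [Real.zero_rpow h0.ne'] using this.tendsto x
  exact squeeze_zero (fun _ => dist_nonneg) (fun y => by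
    rw [Real.dist_eq]; exact Calpha_holder hφ y x) h

lemma zero_mem_Calpha (n : ℕ) (α : ℝ) : (0 : Rn n → ℝ) ∈ Calpha n α :=
  ⟨by simp, by simp, fun x x' => by simp; positivity⟩

/-- The kernel `z ↦ φ_t(y - z)`. -/
def dil {n : ℕ} (φ : Rn n → ℝ) (y : Rn n) (t : ℝ) (z : Rn n) : ℝ :=
  (t ^ n)⁻¹ * φ (t⁻¹ • (y - z))

section dil
variable {n : ℕ} {α : ℝ} {φ : Rn n → ℝ} {y : Rn n} {t : ℝ}

lemma dil_eq_zero (hφ : φ ∈ Calpha n α) (ht : 0 < t) {z : Rn n}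
    (hz : t < dist z y) : dil φ y t z = 0 := by
  rw [dil, Calpha_eq_zero hφ, mul_zero]
  rw [norm_smul, norm_inv, Real.norm_of_nonneg ht.le, ← dist_eq_norm, dist_comm,
    inv_mul_eq_div, lt_div_iff₀ ht]
  linarith

lemma dil_bound (hn : 0 < n) (h1 : α ≤ 1) (hφ : φ ∈ Calpha n α) (ht : 0 < t)
    (z : Rn n) : |dil φ y t z| ≤ 3 * (t ^ n)⁻¹ := by
  rw [dil, abs_mul, abs_of_pos (by positivity : 0 < (t ^ n)⁻¹), mul_comm]
  gcongr
  exact Calpha_bound hn h1 hφ _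

lemma dil_holder (hφ : φ ∈ Calpha n α) (ht : 0 < t)
    (z z' : Rn n) : |dil φ y t z - dil φ y t z'| ≤ (t ^ n)⁻¹ * (dist z z' / t) ^ α := by
  rw [dil, dil, ← mul_sub, abs_mul, abs_of_pos (by positivity : 0 < (t ^ n)⁻¹)]
  gcongr
  refine (Calpha_holder hφ _ _).trans_eq ?_
  rw [← smul_sub, sub_sub_sub_cancel_left, norm_smul, norm_inv, Real.norm_of_nonneg ht.le,
    ← dist_eq_norm, dist_comm, inv_mul_eq_div]

lemma dil_continuous (h0 : 0 < α) (hφ : φ ∈ Calpha n α) : Continuous (dil φ y t) := by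
  have := Calpha_continuous h0 hφ
  unfold dil; fun_prop

lemma dil_integral (hφ : φ ∈ Calpha n α) : ∫ z, dil φ y t z = 0 := by
  unfold dil
  rw [integral_const_mul, integral_sub_left_eq_self (fun z => φ (t⁻¹ • z)) volume y,
    Measure.integral_comp_smul, hφ.2.1]
  simp

lemma dil_mul_integrable (hn : 0 < n) (h0 : 0 < α) (h1 : α ≤ 1) (hφ : φ ∈ Calpha n α)
    (ht : 0 < t) {f : Rn n → ℝ} (hf : LocallyIntegrable f volume) :
    Integrable fun z => dil φ y t z * f z := by
  have h : IntegrableOn (fun z => dil φ y t z * f z) (closedBall y t) := by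
    refine Integrable.bdd_mul (c := 3 * (t ^ n)⁻¹) (hf.integrableOn_isCompact (isCompact_closedBall y t))
      (dil_continuous h0 hφ).aestronglyMeasurable (ae_of_all _ fun z => ?_)
    exact dil_bound hn h1 hφ ht z
  refine (integrableOn_iff_integrable_of_support_subset ?_).1 h
  intro z hz
  by_contra hz'
  exact hz (by simp [dil_eq_zero hφ ht (not_le.1 hz')])

lemma abs_integral_dil_le (hn : 0 < n) (h1 : α ≤ 1) (hφ : φ ∈ Calpha n α)
    (ht : 0 < t) {f : Rn n → ℝ} (hf : LocallyIntegrable f volume) :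
    |∫ z, dil φ y t z * f z| ≤ 3 * (t ^ n)⁻¹ * ∫ z in closedBall y t, |f z| := by
  have hi := hf.integrableOn_isCompact (isCompact_closedBall y t)
  rw [← integral_const_mul, ← setIntegral_eq_integral_of_forall_compl_eq_zero
    (s := closedBall y t) fun z hz => by
      rw [dil_eq_zero hφ ht (not_le.1 hz), zero_mul]]
  refine (abs_integral_le_integral_abs).trans ?_
  refine integral_mono_of_nonneg (ae_of_all _ fun _ => abs_nonneg _) (hi.abs.const_mul _)
    (ae_of_all _ fun z => ?_)
  simp only [abs_mul]
  gcongr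
  exact dil_bound hn h1 hφ ht z

end dil

section Aalpha
variable {n : ℕ} {α : ℝ} {f : Rn n → ℝ} {y y' : Rn n} {t t' : ℝ}

lemma Aalpha_nonneg : 0 ≤ Aalpha α f y t :=
  Real.iSup_nonneg fun _ => Real.iSup_nonneg fun _ => abs_nonneg _

lemma Aalpha_le {c : ℝ} (hc : 0 ≤ c)
    (h : ∀ φ ∈ Calpha n α, |∫ z, dil φ y t z * f z| ≤ c) : Aalpha α f y t ≤ c :=
  Real.iSup_le (fun φ => Real.iSup_le (fun hφ => h φ hφ) hc) hc

lemma le_Aalpha (hn : 0 < n) (h1 : α ≤ 1) (ht : 0 < t)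
    (hf : LocallyIntegrable f volume) {φ : Rn n → ℝ} (hφ : φ ∈ Calpha n α) :
    |∫ z, dil φ y t z * f z| ≤ Aalpha α f y t := by
  have hb : BddAbove (range fun φ : Rn n → ℝ => ⨆ (_ : φ ∈ Calpha n α),
      |∫ z, dil φ y t z * f z|) := by
    refine ⟨3 * (t ^ n)⁻¹ * ∫ z in closedBall y t, |f z|, ?_⟩
    rintro _ ⟨φ, rfl⟩
    have hI : 0 ≤ ∫ z in closedBall y t, |f z| := integral_nonneg fun _ => abs_nonneg _
    exact Real.iSup_le (fun hφ => abs_integral_dil_le hn h1 hφ ht hf) (by positivity)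
  refine le_trans ?_ (le_ciSup hb φ)
  simp [hφ]

lemma exists_half_Aalpha : ∃ φ ∈ Calpha n α,
    Aalpha α f y t / 2 ≤ |∫ z, dil φ y t z * f z| := by
  by_contra! hc
  have h0 : 0 ≤ Aalpha α f y t / 2 := div_nonneg Aalpha_nonneg zero_le_two
  have h1 := Aalpha_le h0 fun φ hφ => (hc φ hφ).le
  have h2 := hc 0 (zero_mem_Calpha n α)
  have h3 := abs_nonneg (∫ z, dil 0 y t z * f z)
  linarith

/-- Replacing the pair `(y, t)` by `(y', t')` with `B(y, t) ⊆ B(y', t')` costs a power of `t'/t`: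
a rescaled element of `𝒞_α` is a multiple of another element of `𝒞_α`. -/
lemma Aalpha_mono (hn : 0 < n) (h1 : α ≤ 1) (hf : LocallyIntegrable f volume)
    (ht : 0 < t) (hyt : dist y y' + t ≤ t') :
    Aalpha α f y t ≤ (t' / t) ^ (n + 1) * Aalpha α f y' t' := by
  have htt : t ≤ t' := by linarith [dist_nonneg (x := y) (y := y')]
  have ht' : 0 < t' := by linarith
  have hA : 0 ≤ Aalpha α f y' t' := Aalpha_nonneg
  refine Aalpha_le (by positivity) fun φ hφ => ?_
  set ψ : Rn n → ℝ := fun u => (t / t') ^ α * φ ((t⁻¹ * t') • u + t⁻¹ • (y - y')) with hψd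
  have hψ : ψ ∈ Calpha n α := by
    refine ⟨fun x hx => ?_, ?_, fun x x' => ?_⟩
    · rw [hψd]
      simp only
      rw [Calpha_eq_zero hφ, mul_zero]
      have h3 : (t⁻¹ * t') • x + t⁻¹ • (y - y') = t⁻¹ • (t' • x + (y - y')) := by
        rw [smul_add, smul_smul]
      rw [h3, norm_smul, norm_inv, Real.norm_of_nonneg ht.le, inv_mul_eq_div, lt_div_iff₀ ht]
      have h4 := norm_sub_le (t' • x + (y - y')) (y - y')
      rw [add_sub_cancel_right, norm_smul, Real.norm_of_nonneg ht'.le, ← dist_eq_norm y y'] at h4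
      nlinarith
    · rw [hψd, integral_const_mul,
        Measure.integral_comp_smul volume (fun u => φ (u + t⁻¹ • (y - y'))),
        integral_add_right_eq_self, hφ.2.1]
      simp
    · rw [hψd]
      simp only
      rw [← mul_sub, abs_mul, abs_of_nonneg (by positivity)]
      calc _ ≤ (t / t') ^ α * ((t' / t) * ‖x - x'‖) ^ α := by
            gcongr
            refine (Calpha_holder hφ _ _).trans_eq ?_
            rw [add_sub_add_right_eq_sub, ← smul_sub, norm_smul,
              Real.norm_of_nonneg (by positivity), inv_mul_eq_div]
        _ = _ := by
            rw [← Real.mul_rpow (by positivity) (by positivity)]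
            congr 1; field_simp
  have hd : ∀ z, dil φ y t z = (t' / t) ^ n * (t' / t) ^ α * dil ψ y' t' z := by
    intro z
    have h5 : (t⁻¹ * t') • t'⁻¹ • (y' - z) + t⁻¹ • (y - y') = t⁻¹ • (y - z) := by
      rw [smul_smul, mul_assoc, mul_inv_cancel₀ ht'.ne', mul_one, ← smul_add]
      congr 1; abel
    have h6 : (t' / t) ^ α * (t / t') ^ α = 1 := by
      rw [← Real.mul_rpow (by positivity) (by positivity), div_mul_div_cancel₀ ht.ne',
        div_self ht'.ne', Real.one_rpow]
    rw [dil, dil, hψd]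
    simp only
    rw [h5, div_pow]
    calc _ = (t' ^ n / t ^ n * (t' ^ n)⁻¹) * ((t' / t) ^ α * (t / t') ^ α) *
          φ (t⁻¹ • (y - z)) := by rw [h6]; field_simp
      _ = _ := by ring
  have h7 : ∫ z, dil φ y t z * f z = (t' / t) ^ n * (t' / t) ^ α * ∫ z, dil ψ y' t' z * f z := by
    rw [← integral_const_mul]; congr 1; ext z; rw [hd]; ring
  rw [h7, abs_mul, abs_of_nonneg (by positivity), pow_succ]
  gcongr
  · calc (t' / t) ^ α ≤ (t' / t) ^ (1 : ℝ) :=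
        Real.rpow_le_rpow_of_exponent_le ((one_le_div ht).2 htt) h1
      _ = _ := Real.rpow_one _
  · exact le_Aalpha hn h1 ht' hf hψ

/-- `A_α f (y, t)` only depends on the values of `f` in the closed ball `B(y, t)`. -/
lemma Aalpha_congr {g : Rn n → ℝ} (ht : 0 < t) (h : ∀ z ∈ closedBall y t, f z = g z) :
    Aalpha α f y t = Aalpha α g y t := by
  have : ∀ φ ∈ Calpha n α, ∀ z, dil φ y t z * f z = dil φ y t z * g z := by
    intro φ hφ z
    by_cases hz : z ∈ closedBall y t
    · rw [h z hz]
    · rw [dil_eq_zero hφ ht (not_le.1 hz)]; simp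
  unfold Aalpha
  congr 1; ext φ; congr 1; ext hφ; congr 2; ext z; exact this φ hφ z

lemma continuousAt_integral_dil (hn : 0 < n) (h0 : 0 < α) (h1 : α ≤ 1)
    (hf : LocallyIntegrable f volume) {φ : Rn n → ℝ} (hφ : φ ∈ Calpha n α) {p : Rn n × ℝ}
    (hp : 0 < p.2) : ContinuousAt (fun p : Rn n × ℝ => ∫ z, dil φ p.1 p.2 z * f z) p := by
  obtain ⟨y, t⟩ := p
  simp only at hp
  have hnear : ∀ᶠ q : Rn n × ℝ in nhds (y, t), dist q.1 y < 1 ∧ t / 2 < q.2 ∧ q.2 < 2 * t := by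
    refine ((continuous_fst.tendsto (y, t)).eventually (ball_mem_nhds y one_pos)).and
      (((continuous_snd.tendsto (y, t)).eventually (lt_mem_nhds (by simp; linarith))).and
      ((continuous_snd.tendsto (y, t)).eventually (gt_mem_nhds (by simp; linarith))))
  have hφc := Calpha_continuous h0 hφ
  refine continuousAt_of_dominated
    (bound := (closedBall y (2 * t + 1)).indicator fun z => 3 * ((t / 2) ^ n)⁻¹ * |f z|) ?_ ?_ ?_ ?_
  · exact Filter.Eventually.of_forall fun q =>
      (dil_continuous h0 hφ).aestronglyMeasurable.mul hf.aestronglyMeasurable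
  · filter_upwards [hnear] with q hq
    have hq2 : 0 < q.2 := by linarith [hq.2.1]
    refine ae_of_all _ fun z => ?_
    by_cases hz : z ∈ closedBall y (2 * t + 1)
    · rw [indicator_of_mem hz, Real.norm_eq_abs, abs_mul]
      gcongr
      refine (dil_bound hn h1 hφ hq2 z).trans ?_
      gcongr
      exact hq.2.1.le
    · rw [indicator_of_notMem hz, dil_eq_zero hφ hq2]
      · simp
      · have h3 := dist_triangle z q.1 y
        rw [mem_closedBall, not_le] at hz
        linarith [hq.1, hq.2.2]
  · rw [integrable_indicator_iff measurableSet_closedBall]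
    exact (hf.integrableOn_isCompact (isCompact_closedBall _ _)).abs.const_mul _
  · refine ae_of_all _ fun z => ?_
    unfold dil
    have ht0 : t ≠ 0 := hp.ne'
    have : ContinuousAt (fun q : Rn n × ℝ => q.2⁻¹ • (q.1 - z)) (y, t) :=
      (continuousAt_snd.inv₀ ht0).smul (continuousAt_fst.sub continuousAt_const)
    exact (((continuousAt_snd.pow n).inv₀ (pow_ne_zero _ ht0)).mul
      (hφc.continuousAt.comp this)).mul continuousAt_const

/-- `A_α f` is lower semicontinuous on the upper half space, hence measurable there. -/
lemma measurable_Aalpha (hn : 0 < n) (h0 : 0 < α) (h1 : α ≤ 1)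
    (hf : LocallyIntegrable f volume) :
    Measurable ({p : Rn n × ℝ | 0 < p.2}.indicator fun p => Aalpha α f p.1 p.2) := by
  refine measurable_of_Ioi fun c => ?_
  rcases lt_or_ge c 0 with hc | hc
  · convert MeasurableSet.univ
    ext p
    simp only [mem_preimage, mem_Ioi, mem_univ, iff_true]
    exact hc.trans_le (indicator_nonneg (fun _ _ => Aalpha_nonneg) p)
  · apply IsOpen.measurableSet
    rw [isOpen_iff_mem_nhds]
    intro p hp
    have hp2 : 0 < p.2 := by
      by_contra hp2
      rw [mem_preimage, indicator_of_notMem (by exact hp2)] at hp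
      exact absurd hp (not_lt.2 hc)
    rw [mem_preimage, indicator_of_mem (by exact hp2), mem_Ioi] at hp
    obtain ⟨φ, hφ, hlt⟩ : ∃ φ ∈ Calpha n α, c < |∫ z, dil φ p.1 p.2 z * f z| := by
      by_contra! hcon
      exact absurd hp (not_lt.2 (Aalpha_le hc hcon))
    have hev := (continuousAt_integral_dil hn h0 h1 hf hφ hp2).abs.eventually (lt_mem_nhds hlt)
    have hpos : ∀ᶠ q : Rn n × ℝ in nhds p, 0 < q.2 :=
      (continuous_snd.tendsto p).eventually (lt_mem_nhds hp2)
    filter_upwards [hev, hpos] with q hq hq2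
    rw [mem_preimage, indicator_of_mem (by exact hq2), mem_Ioi]
    exact hq.trans_le (le_Aalpha hn h1 hq2 hf hφ)

end Aalpha

/-! ### Change of aperture for integrals over cones -/

/-- The integral of `F` over the cone of aperture `β` with vertex `x`. -/
def coneInt {n : ℕ} (F : Rn n × ℝ → ENNReal) (β : ℝ) (x : Rn n) : ENNReal :=
  ∫⁻ p in {p : Rn n × ℝ | 0 < p.2 ∧ dist x p.1 < β * p.2}, F p

lemma measurableSet_cone {n : ℕ} (β : ℝ) (x : Rn n) :
    MeasurableSet {p : Rn n × ℝ | 0 < p.2 ∧ dist x p.1 < β * p.2} := by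
  simp only [Set.ofPred_and]
  exact (measurableSet_lt (by fun_prop) (by fun_prop)).inter
    (measurableSet_lt (by fun_prop) (by fun_prop))

lemma measurableSet_coneGraph {n : ℕ} (β : ℝ) :
    MeasurableSet {u : Rn n × (Rn n × ℝ) | 0 < u.2.2 ∧ dist u.1 u.2.1 < β * u.2.2} := by
  simp only [Set.ofPred_and]
  exact (measurableSet_lt (by fun_prop) (by fun_prop)).inter
    (measurableSet_lt (by fun_prop) (by fun_prop))

lemma measurable_coneInt {n : ℕ} {F : Rn n × ℝ → ENNReal} (hF : Measurable F) (β : ℝ) :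
    Measurable (coneInt F β) := by
  have : ∀ x, coneInt F β x = ∫⁻ p, {u : Rn n × (Rn n × ℝ) |
      0 < u.2.2 ∧ dist u.1 u.2.1 < β * u.2.2}.indicator (fun u => F u.2) (x, p) := by
    intro x; rw [coneInt, ← lintegral_indicator (measurableSet_cone β x)]; rfl
  rw [show coneInt F β = _ from funext this]
  apply Measurable.lintegral_prod_right'
  exact (hF.comp measurable_snd).indicator (measurableSet_coneGraph β)

lemma lintegral_coneInt_mul {n : ℕ} {F : Rn n × ℝ → ENNReal} (hF : Measurable F)
    {h : Rn n → ENNReal} (hh : Measurable h) (β : ℝ) :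
    ∫⁻ x, coneInt F β x * h x =
      ∫⁻ p in {p : Rn n × ℝ | 0 < p.2}, F p * ∫⁻ x in ball p.1 (β * p.2), h x := by
  have hG := measurableSet_coneGraph (n := n) β
  have e1 : ∀ x, coneInt F β x * h x = ∫⁻ p, {u : Rn n × (Rn n × ℝ) |
      0 < u.2.2 ∧ dist u.1 u.2.1 < β * u.2.2}.indicator (fun u => F u.2 * h u.1) (x, p) := by
    intro x
    rw [coneInt, ← lintegral_mul_const _ hF, ← lintegral_indicator (measurableSet_cone β x)]; rfl
  simp_rw [e1]
  rw [lintegral_lintegral_swap]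
  · rw [← lintegral_indicator (isOpen_lt (by fun_prop) (by fun_prop)).measurableSet]
    congr 1; ext p
    by_cases hp : 0 < p.2
    · rw [indicator_of_mem (by exact hp), ← lintegral_const_mul _ hh,
        ← lintegral_indicator measurableSet_ball]
      congr 1; ext x
      simp only [indicator, mem_ofPred_eq, mem_ball, hp, true_and]
    · rw [indicator_of_notMem (by exact hp)]
      simp [indicator, hp]
  · apply Measurable.aemeasurable
    exact Measurable.indicator (by fun_prop) hG

/-- Enlarging the aperture is controlled, in duality, by the maximal function. -/
lemma lintegral_coneInt_mul_le {n : ℕ} {F : Rn n × ℝ → ENNReal} (hF : Measurable F)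
    {h : Rn n → ENNReal} (hh : Measurable h) {β : ℝ} (hβ : 1 ≤ β) :
    ∫⁻ x, coneInt F β x * h x ≤ ENNReal.ofReal ((4 * β) ^ n) * (ballVol n)⁻¹ *
      ∫⁻ x, coneInt F 1 x * maxF h x := by
  rw [lintegral_coneInt_mul hF hh, lintegral_coneInt_mul hF (measurable_maxF hh),
    ← lintegral_const_mul' _ _ (ENNReal.mul_ne_top ENNReal.ofReal_ne_top
      (ENNReal.inv_ne_top.2 (ballVol_pos n).ne'))]
  refine setLIntegral_mono' (isOpen_lt (by fun_prop) (by fun_prop)).measurableSet fun p hp => ?_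
  have hp' : 0 < p.2 := hp
  set y := p.1
  set t := p.2
  rw [mul_left_comm]
  gcongr
  have hpt : ∀ z ∈ ball y t, ∫⁻ x in ball y (β * t), h x ≤
      ENNReal.ofReal ((2 * (2 * β * t)) ^ n) * maxF h z := by
    intro z hz
    refine le_trans (lintegral_mono_set ?_) (lintegral_ball_le_maxF h z (r := 2 * β * t) (by positivity))
    refine ball_subset_ball' ?_
    rw [mem_ball, dist_comm] at hz
    nlinarith
  have h1 : (∫⁻ x in ball y (β * t), h x) * (ENNReal.ofReal (t ^ n) * ballVol n) ≤
      ENNReal.ofReal ((2 * (2 * β * t)) ^ n) * ∫⁻ z in ball y t, maxF h z := by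
    rw [← vol_ball y hp', ← setLIntegral_const, ← lintegral_const_mul' _ _ ENNReal.ofReal_ne_top]
    exact setLIntegral_mono' measurableSet_ball hpt
  have hw0 := (ballVol_pos n).ne'
  have hwt := ballVol_ne_top n
  have hV : ENNReal.ofReal (t ^ n) * ballVol n ≠ 0 := by simp [hw0]; positivity
  rw [← ENNReal.le_div_iff_mul_le (Or.inl hV) (Or.inl (by finiteness))] at h1
  refine h1.trans_eq ?_
  rw [show 2 * (2 * β * t) = 4 * β * t by ring, mul_pow (4 * β) t,
    ENNReal.ofReal_mul (by positivity), ENNReal.div_eq_inv_mul,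
    ENNReal.mul_inv (Or.inr hwt) (Or.inr hw0)]
  have : (ENNReal.ofReal (t ^ n))⁻¹ * ENNReal.ofReal (t ^ n) = 1 :=
    ENNReal.inv_mul_cancel (by simp; positivity) ENNReal.ofReal_ne_top
  calc _ = ((ENNReal.ofReal (t ^ n))⁻¹ * ENNReal.ofReal (t ^ n)) *
        (ENNReal.ofReal ((4 * β) ^ n) * (ballVol n)⁻¹ * ∫⁻ z in ball y t, maxF h z) := by ring
    _ = _ := by rw [this, one_mul, one_mul]

/-- The change of aperture inequality with the sharp power `βⁿ`, for the integrals of an arbitrary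
density over cones. -/
lemma coneInt_aperture {n : ℕ} (hn : 0 < n) {q : ℝ} (hq : 1 < q) :
    ∃ C : ENNReal, C ≠ ⊤ ∧ ∀ (F : Rn n × ℝ → ENNReal), Measurable F → ∀ β : ℝ, 1 ≤ β →
      ∫⁻ x, coneInt F β x ^ q ≤ (C * ENNReal.ofReal (β ^ n)) ^ q * ∫⁻ x, coneInt F 1 x ^ q := by
  set r := q.conjExponent with hr
  have hqr : q.HolderConjugate r := Real.HolderConjugate.conjExponent hq
  obtain ⟨C0, hC0, hmax⟩ := maxF_strong hn hqr.symm.lt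
  refine ⟨ENNReal.ofReal (4 ^ n) * (ballVol n)⁻¹ * C0 ^ (1 / r), ?_, ?_⟩
  · have := (ballVol_pos n).ne'
    have := hqr.symm.pos
    finiteness
  intro F hF β hβ
  set g := coneInt F β with hg
  have hgm : Measurable g := measurable_coneInt hF β
  set D := ENNReal.ofReal ((4 * β) ^ n) * (ballVol n)⁻¹ * C0 ^ (1 / r) with hD
  set J := ∫⁻ x, coneInt F 1 x ^ q with hJ
  -- truncate `g`, so that the norm which is divided out at the end is finite
  set G : ℕ → Rn n → ENNReal := fun N => (ball (0 : Rn n) N).indicator fun x => min (g x) N with hG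
  have hGm : ∀ N, Measurable (G N) := fun N =>
    (hgm.min measurable_const).indicator measurableSet_ball
  have hGle : ∀ N x, G N x ≤ N := fun N x => by
    simp only [hG, indicator]; split_ifs <;> simp
  have hGg : ∀ N x, G N x ≤ g x := fun N x => by
    simp only [hG, indicator]; split_ifs <;> simp
  have hq0 : 0 < q := by linarith
  have hI : ∀ N, ∫⁻ x, G N x ^ q ≤ D ^ q * J := by
    intro N
    set I := ∫⁻ x, G N x ^ q with hIdef
    have hIt : I ≠ ⊤ := by
      have : I ≤ ∫⁻ x in ball (0 : Rn n) N, (N : ENNReal) ^ q := by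
        rw [← lintegral_indicator measurableSet_ball]
        refine lintegral_mono fun x => ?_
        simp only [hG, indicator]
        split_ifs
        · gcongr; exact min_le_right _ _
        · simp [hq0]
      refine ne_top_of_le_ne_top ?_ this
      rw [setLIntegral_const]
      have := measure_ball_lt_top (μ := volume) (x := (0 : Rn n)) (r := (N : ℝ))
      finiteness
    have h1 : I ≤ D * J ^ (1 / q) * I ^ (1 / r) := by
      calc I ≤ ∫⁻ x, g x * G N x ^ (q - 1) := by
            refine lintegral_mono fun x => ?_
            have : G N x ^ q = G N x * G N x ^ (q - 1) := by
              conv_lhs => rw [show q = 1 + (q - 1) by ring]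
              rw [ENNReal.rpow_add_of_nonneg _ _ (by norm_num) (by linarith), ENNReal.rpow_one]
            simp only [this]
            gcongr
            exact hGg N x
        _ ≤ ENNReal.ofReal ((4 * β) ^ n) * (ballVol n)⁻¹ *
              ∫⁻ x, coneInt F 1 x * maxF (fun x => G N x ^ (q - 1)) x :=
            lintegral_coneInt_mul_le hF ((hGm N).pow_const _) hβ
        _ ≤ ENNReal.ofReal ((4 * β) ^ n) * (ballVol n)⁻¹ *
              (J ^ (1 / q) * (∫⁻ x, maxF (fun x => G N x ^ (q - 1)) x ^ r) ^ (1 / r)) := by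
            gcongr
            exact ENNReal.lintegral_mul_le_Lp_mul_Lq _ hqr (measurable_coneInt hF 1).aemeasurable
              (measurable_maxF ((hGm N).pow_const _)).aemeasurable
        _ ≤ ENNReal.ofReal ((4 * β) ^ n) * (ballVol n)⁻¹ *
              (J ^ (1 / q) * (C0 * I) ^ (1 / r)) := by
            have hr0 := hqr.symm.pos
            gcongr
            refine (hmax _ ((hGm N).pow_const _) ⟨(N : ENNReal) ^ (q - 1), ?_, fun x => ?_⟩).trans_eq ?_
            · have : 0 < q - 1 := by linarith
              finiteness
            · have : 0 < q - 1 := by linarith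
              gcongr; exact hGle N x
            · congr 2; ext x
              rw [← ENNReal.rpow_mul, hqr.sub_one_mul_conj]
        _ = _ := by
            have hr0 := hqr.symm.pos
            rw [ENNReal.mul_rpow_of_nonneg _ _ (by positivity)]; ring
    rcases eq_or_ne I 0 with h0 | h0
    · rw [h0]; exact zero_le
    have h2 : I ^ (1 / q) ≤ D * J ^ (1 / q) := by
      have h3 : I = I ^ (1 / q) * I ^ (1 / r) := by
        rw [← ENNReal.rpow_add _ _ h0 hIt, hqr.one_div_add_one_div, div_one, ENNReal.rpow_one]
      rw [h3] at h1
      have h4 : I ^ (1 / r) ≠ 0 := by simp [h0, hIt]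
      have h5 : I ^ (1 / r) ≠ ⊤ := by simp [h0, hIt]
      rw [← h3] at h1
      nth_rw 1 [h3] at h1
      exact (ENNReal.mul_le_mul_iff_left h4 h5).1 h1
    calc I = (I ^ (1 / q)) ^ q := by rw [← ENNReal.rpow_mul, one_div_mul_cancel hq0.ne', ENNReal.rpow_one]
      _ ≤ (D * J ^ (1 / q)) ^ q := by gcongr
      _ = _ := by
        rw [ENNReal.mul_rpow_of_nonneg _ _ hq0.le, ← ENNReal.rpow_mul, one_div_mul_cancel hq0.ne',
          ENNReal.rpow_one]
  have hlim : Filter.Tendsto (fun N => ∫⁻ x, G N x ^ q) Filter.atTop (nhds (∫⁻ x, g x ^ q)) := by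
    refine lintegral_tendsto_of_tendsto_of_monotone (fun N => ((hGm N).pow_const q).aemeasurable)
      (ae_of_all _ fun x N M hNM => ?_) (ae_of_all _ fun x => ?_)
    · simp only
      gcongr
      have hc : (N : ENNReal) ≤ M := by exact_mod_cast hNM
      have hc' : (N : ℝ) ≤ M := by exact_mod_cast hNM
      simp only [hG]
      refine (indicator_le_indicator_of_subset (ball_subset_ball hc') (fun _ => zero_le) x).trans ?_
      refine indicator_le_indicator ?_
      gcongr
    · have h1 : Filter.Tendsto (fun N : ℕ => min (g x) N ^ q) Filter.atTop (nhds (g x ^ q)) := by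
        have h2 : Filter.Tendsto (fun N : ℕ => min (g x) (N : ENNReal)) Filter.atTop
            (nhds (min (g x) ⊤)) := tendsto_const_nhds.min ENNReal.tendsto_nat_nhds_top
        rw [min_top_right] at h2
        exact (ENNReal.continuous_rpow_const.tendsto _).comp h2
      refine h1.congr' ?_
      filter_upwards [Filter.eventually_gt_atTop ⌈‖x‖⌉₊] with N hN
      simp only [hG]
      rw [indicator_of_mem]
      rw [mem_ball_zero_iff]
      exact (Nat.le_ceil _).trans_lt (by exact_mod_cast hN)
  refine (le_of_tendsto' hlim hI).trans_eq ?_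
  congr 2
  rw [hD, mul_pow, ENNReal.ofReal_mul (by positivity)]; ring

/-! ### Counting lattice points -/

/-- The radius attached to the lattice index `(k, m)`, comparable to `2ᵏ`. -/
def latR {n : ℕ} (i : ℤ × (Fin n → ℤ)) : ℝ := (n + 2) * 2 ^ i.1

/-- The centre `2ᵏ m` attached to the lattice index `(k, m)`. -/
def latY {n : ℕ} (i : ℤ × (Fin n → ℤ)) : Rn n := WithLp.toLp 2 fun l => (2 : ℝ) ^ i.1 * (i.2 l : ℝ)

lemma latR_pos {n : ℕ} (i : ℤ × (Fin n → ℤ)) : 0 < latR i := by unfold latR; positivity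

lemma coord_le_dist {n : ℕ} (x y : Rn n) (l : Fin n) : |x l - y l| ≤ dist x y := by
  rw [dist_eq_norm]
  exact (Real.norm_eq_abs _ ▸ PiLp.norm_apply_le (x - y) l)

/-- The number of lattice points of scale `2ᵏ` in a ball of radius `r`. -/
lemma lat_card {n : ℕ} (J : Finset (ℤ × (Fin n → ℤ))) (k : ℤ) (z : Rn n) {r : ℝ} (hr : 0 ≤ r)
    (hJ : ∀ i ∈ J, dist z (latY i) ≤ r) :
    ((J.filter fun i => i.1 = k).card : ℝ) ≤ (2 * r / 2 ^ k + 1) ^ n := by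
  have h2 : (0 : ℝ) < 2 ^ k := by positivity
  set T : Finset (Fin n → ℤ) := Fintype.piFinset fun l =>
    Finset.Icc ⌈(z l - r) / 2 ^ k⌉ ⌊(z l + r) / 2 ^ k⌋ with hT
  have hle : (J.filter fun i => i.1 = k).card ≤ T.card := by
    refine Finset.card_le_card_of_injOn (fun i => i.2) ?_ ?_
    · intro i hi
      rw [Finset.mem_coe, Finset.mem_filter] at hi
      rw [Finset.mem_coe, hT, Fintype.mem_piFinset]
      intro l
      have h3 := (coord_le_dist z (latY i) l).trans (hJ i hi.1)
      rw [latY, hi.2, abs_le] at h3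
      simp only at h3
      rw [Finset.mem_Icc, Int.ceil_le, Int.le_floor, div_le_iff₀ h2, le_div_iff₀ h2]
      constructor <;> linarith [h3.1, h3.2]
    · intro i hi j hj hij
      rw [Finset.mem_coe, Finset.mem_filter] at hi hj
      exact Prod.ext (hi.2.trans hj.2.symm) hij
  calc ((J.filter fun i => i.1 = k).card : ℝ) ≤ T.card := by exact_mod_cast hle
    _ = ∏ l : Fin n, ((Finset.Icc ⌈(z l - r) / 2 ^ k⌉ ⌊(z l + r) / 2 ^ k⌋).card : ℝ) := by
        rw [hT, Fintype.card_piFinset]; push_cast; rfl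
    _ ≤ ∏ l : Fin n, (2 * r / 2 ^ k + 1) := by
        refine Finset.prod_le_prod (fun _ _ => Nat.cast_nonneg _) fun l _ => ?_
        rw [Int.card_Icc]
        have h4 : (((⌊(z l + r) / 2 ^ k⌋ + 1 - ⌈(z l - r) / 2 ^ k⌉).toNat : ℤ) : ℝ) ≤
            2 * r / 2 ^ k + 1 := by
          rw [Int.toNat_eq_max]
          push_cast
          refine max_le ?_ (by positivity)
          have h5 := Int.floor_le ((z l + r) / 2 ^ k)
          have h6 := Int.le_ceil ((z l - r) / 2 ^ k)
          have h7 : 2 * r / (2 : ℝ) ^ k = (z l + r) / 2 ^ k - (z l - r) / 2 ^ k := by ring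
          linarith
        exact_mod_cast h4
    _ = _ := by simp

lemma sum_le_geom {K : Finset ℤ} {w : ℤ → ℝ} {q : ℝ} (h0 : 0 ≤ q) (h1 : q < 1) (e : ℤ → ℕ)
    (he : Set.InjOn e K) (hw : ∀ k ∈ K, w k ≤ q ^ e k) : ∑ k ∈ K, w k ≤ (1 - q)⁻¹ := by
  calc ∑ k ∈ K, w k ≤ ∑ k ∈ K, q ^ e k := Finset.sum_le_sum hw
    _ = ∑ m ∈ K.image e, q ^ m := (Finset.sum_image he).symm
    _ ≤ ∑' m, q ^ m := (summable_geometric_of_lt_one h0 h1).sum_le_tsum _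
        fun _ _ => pow_nonneg h0 _
    _ = _ := tsum_geometric_of_lt_one h0 h1

lemma two_rpow_neg_lt_one {α : ℝ} (h : 0 < α) : (2 : ℝ) ^ (-α) < 1 :=
  Real.rpow_lt_one_of_one_lt_of_neg one_lt_two (by linarith)

lemma two_rpow_neg_pow (α : ℝ) (m : ℕ) : ((2 : ℝ) ^ (-α)) ^ m = (((2 : ℝ) ^ m)⁻¹) ^ α := by
  rw [← Real.rpow_natCast, ← Real.rpow_mul zero_le_two, ← Real.rpow_natCast,
    ← Real.rpow_neg zero_le_two, ← Real.rpow_mul zero_le_two]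
  congr 1; ring

lemma sum_small_scales {α : ℝ} (hα : 0 < α) (K : Finset ℤ) {D B : ℝ} (hD : 0 < D) (hB : 0 < B)
    (hK : ∀ k ∈ K, D * 2 ^ k ≤ B) :
    ∑ k ∈ K, (D * 2 ^ k / B) ^ α ≤ (1 - (2 : ℝ) ^ (-α))⁻¹ := by
  rcases K.eq_empty_or_nonempty with rfl | hne
  · simp [(two_rpow_neg_lt_one hα).le]
  refine sum_le_geom (by positivity) (two_rpow_neg_lt_one hα) (fun k => (K.max' hne - k).toNat)
    ?_ fun k hk => ?_
  · intro k hk l hl hkl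
    have := K.le_max' k hk; have := K.le_max' l hl
    simp only at hkl; omega
  · rw [two_rpow_neg_pow]
    have h1 := K.le_max' k hk
    have h2 := hK _ (K.max'_mem hne)
    refine Real.rpow_le_rpow (by positivity) ?_ hα.le
    rw [← zpow_natCast, Int.toNat_of_nonneg (by omega), ← zpow_neg, neg_sub,
      zpow_sub₀ two_ne_zero, div_le_div_iff₀ hB (by positivity)]
    nlinarith [show (0 : ℝ) < 2 ^ k by positivity]

lemma sum_large_scales {α : ℝ} (hα : 0 < α) (K : Finset ℤ) {D B : ℝ} (hD : 0 < D) (hB : 0 < B)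
    (hK : ∀ k ∈ K, B ≤ D * 2 ^ k) :
    ∑ k ∈ K, (B / (D * 2 ^ k)) ^ α ≤ (1 - (2 : ℝ) ^ (-α))⁻¹ := by
  rcases K.eq_empty_or_nonempty with rfl | hne
  · simp [(two_rpow_neg_lt_one hα).le]
  refine sum_le_geom (by positivity) (two_rpow_neg_lt_one hα) (fun k => (k - K.min' hne).toNat)
    ?_ fun k hk => ?_
  · intro k hk l hl hkl
    have := K.min'_le k hk; have := K.min'_le l hl
    simp only at hkl; omega
  · rw [two_rpow_neg_pow]
    have h1 := K.min'_le k hk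
    have h2 := hK _ (K.min'_mem hne)
    refine Real.rpow_le_rpow (by positivity) ?_ hα.le
    rw [← zpow_natCast, Int.toNat_of_nonneg (by omega), ← zpow_neg, neg_sub,
      zpow_sub₀ two_ne_zero, div_le_div_iff₀ (by positivity) (by positivity)]
    nlinarith [show (0 : ℝ) < 2 ^ k by positivity]

lemma lat_sum_large {n : ℕ} {α : ℝ} (hα : 0 < α) (J : Finset (ℤ × (Fin n → ℤ))) (z : Rn n)
    {c B : ℝ} (hc : 0 ≤ c) (hB : 0 < B) (hJ : ∀ i ∈ J, dist z (latY i) ≤ c * latR i)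
    (hJB : ∀ i ∈ J, B ≤ latR i) :
    ∑ i ∈ J, (B / latR i) ^ α ≤ (2 * c * (n + 2) + 1) ^ n * (1 - (2 : ℝ) ^ (-α))⁻¹ := by
  have hs := Finset.sum_comp (s := J) (fun k : ℤ => (B / ((n + 2) * 2 ^ k) : ℝ) ^ α) Prod.fst
  rw [show ∑ i ∈ J, (B / latR i) ^ α = _ from hs]
  calc _ ≤ ∑ k ∈ J.image Prod.fst, (2 * c * (n + 2) + 1) ^ n * (B / ((n + 2) * 2 ^ k) : ℝ) ^ α := by
        refine Finset.sum_le_sum fun k _ => ?_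
        rw [nsmul_eq_mul]
        gcongr
        have h1 := lat_card (J.filter fun i => i.1 = k) k z (r := c * ((n + 2) * 2 ^ k))
          (by positivity) fun i hi => by
            rw [Finset.mem_filter] at hi
            refine (hJ i hi.1).trans_eq ?_
            rw [latR, hi.2]
        rw [Finset.filter_filter] at h1
        simp only [and_self] at h1
        refine h1.trans_eq ?_
        have : (2 : ℝ) ^ k ≠ 0 := by positivity
        congr 1; field_simp
    _ ≤ _ := by
        rw [← Finset.mul_sum]
        gcongr
        refine sum_large_scales hα _ (by positivity) hB fun k hk => ?_
        obtain ⟨i, hi, rfl⟩ := Finset.mem_image.1 hk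
        exact hJB i hi

lemma lat_sum_small {n : ℕ} {α : ℝ} (hα : 0 < α) (J : Finset (ℤ × (Fin n → ℤ))) (z : Rn n)
    {c B : ℝ} (hc : 0 ≤ c) (hB : 0 < B) (hJ : ∀ i ∈ J, dist z (latY i) ≤ c * B)
    (hJB : ∀ i ∈ J, latR i ≤ B) :
    ∑ i ∈ J, latR i ^ n * (latR i / B) ^ α ≤
      ((2 * c * (n + 2) + 1) * B) ^ n * (1 - (2 : ℝ) ^ (-α))⁻¹ := by
  have hs := Finset.sum_comp (s := J)
    (fun k : ℤ => ((n + 2) * 2 ^ k : ℝ) ^ n * ((n + 2) * 2 ^ k / B : ℝ) ^ α) Prod.fst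
  rw [show ∑ i ∈ J, latR i ^ n * (latR i / B) ^ α = _ from hs]
  have hkB : ∀ k ∈ J.image Prod.fst, ((n : ℝ) + 2) * 2 ^ k ≤ B := by
    intro k hk
    obtain ⟨i, hi, rfl⟩ := Finset.mem_image.1 hk
    exact hJB i hi
  calc _ ≤ ∑ k ∈ J.image Prod.fst, ((2 * c * (n + 2) + 1) * B) ^ n *
          ((n + 2) * 2 ^ k / B : ℝ) ^ α := by
        refine Finset.sum_le_sum fun k hk => ?_
        rw [nsmul_eq_mul, ← mul_assoc]
        gcongr
        have h1 := lat_card (J.filter fun i => i.1 = k) k z (r := c * B)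
          (by positivity) fun i hi => hJ i (Finset.mem_filter.1 hi).1
        rw [Finset.filter_filter] at h1
        simp only [and_self] at h1
        calc _ ≤ (2 * (c * B) / 2 ^ k + 1) ^ n * ((n + 2) * 2 ^ k : ℝ) ^ n := by gcongr
          _ ≤ _ := by
            rw [← mul_pow]
            refine pow_le_pow_left₀ (by positivity) ?_ n
            have : (2 : ℝ) ^ k ≠ 0 := by positivity
            calc (2 * (c * B) / 2 ^ k + 1) * (((n : ℝ) + 2) * 2 ^ k)
                = 2 * c * (n + 2) * B + (n + 2) * 2 ^ k := by field_simp
              _ ≤ _ := by linarith [hkB k hk]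
    _ ≤ _ := by
        rw [← Finset.mul_sum]
        gcongr
        exact sum_small_scales hα _ (by positivity) hB hkB

/-! ### Almost orthogonality -/

/-- The volume of the unit ball as a real number. -/
def omg (n : ℕ) : ℝ := (ballVol n).toReal

lemma omg_pos (n : ℕ) : 0 < omg n := ENNReal.toReal_pos (ballVol_pos n).ne' (ballVol_ne_top n)

lemma ofReal_omg (n : ℕ) : ENNReal.ofReal (omg n) = ballVol n := ENNReal.ofReal_toReal (ballVol_ne_top n)

lemma volReal_closedBall {n : ℕ} (x : Rn n) {r : ℝ} (hr : 0 < r) :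
    volume.real (closedBall x r) = r ^ n * omg n := by
  rw [Measure.real, vol_closedBall x hr, ENNReal.toReal_mul, ENNReal.toReal_ofReal (by positivity),
    omg]

section orth
variable {n : ℕ} {α : ℝ}

/-- Almost orthogonality: the cancellation of the kernel with the smaller radius is played against
the Hölder continuity of the one with the larger radius. -/
lemma dil_inner_le (hn : 0 < n) (h0 : 0 < α) (h1 : α ≤ 1) {φ ψ : Rn n → ℝ} (hφ : φ ∈ Calpha n α)
    (hψ : ψ ∈ Calpha n α) {y y' : Rn n} {s t : ℝ} (hs : 0 < s) (ht : 0 < t) :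
    |∫ z, dil φ y s z * dil ψ y' t z| ≤ 3 * omg n * ((t ^ n)⁻¹ * (s / t) ^ α) := by
  have hψc : Continuous (dil ψ y' t) := dil_continuous h0 hψ
  have hψl : LocallyIntegrable (dil ψ y' t) volume := hψc.locallyIntegrable
  have hcl : LocallyIntegrable (fun _ : Rn n => dil ψ y' t y) volume :=
    continuous_const.locallyIntegrable
  have e : ∫ z, dil φ y s z * dil ψ y' t z =
      ∫ z, dil φ y s z * (dil ψ y' t z - dil ψ y' t y) := by
    simp_rw [mul_sub]
    rw [integral_sub (dil_mul_integrable hn h0 h1 hφ hs hψl)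
      (dil_mul_integrable hn h0 h1 hφ hs hcl), integral_mul_const, dil_integral hφ]
    simp
  rw [e]
  refine (abs_integral_dil_le hn h1 hφ hs (hψl.sub hcl)).trans ?_
  have h2 : ∫ z in closedBall y s, |dil ψ y' t z - dil ψ y' t y| ≤
      ((t ^ n)⁻¹ * (s / t) ^ α) * (s ^ n * omg n) := by
    rw [← volReal_closedBall y hs]
    refine (Real.le_norm_self _).trans
      (norm_setIntegral_le_of_norm_le_const measure_closedBall_lt_top fun z hz => ?_)
    rw [Real.norm_eq_abs, abs_abs]
    refine (dil_holder hψ ht z y).trans ?_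
    gcongr
    exact hz
  calc _ ≤ 3 * (s ^ n)⁻¹ * (((t ^ n)⁻¹ * (s / t) ^ α) * (s ^ n * omg n)) := by gcongr; exact h2
    _ = _ := by field_simp

lemma dil_inner_eq_zero {φ ψ : Rn n → ℝ} (hφ : φ ∈ Calpha n α)
    (hψ : ψ ∈ Calpha n α) {y y' : Rn n} {s t : ℝ} (hs : 0 < s) (ht : 0 < t) (hd : s + t < dist y y') :
    ∫ z, dil φ y s z * dil ψ y' t z = 0 := by
  refine integral_eq_zero_of_ae (ae_of_all _ fun z => ?_)
  by_cases hz : s < dist z y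
  · simp [dil_eq_zero hφ hs hz]
  · have h3 := dist_triangle_left y y' z
    simp [dil_eq_zero hψ ht (show t < dist z y' by linarith)]

/-- The constant in the almost orthogonality estimate. -/
def schurC (n : ℕ) (α : ℝ) : ℝ :=
  6 * omg n * ((2 * 2 * (n + 2) + 1) ^ n * (1 - (2 : ℝ) ^ (-α))⁻¹)

lemma geoC_pos {α : ℝ} (h0 : 0 < α) : 0 < (1 - (2 : ℝ) ^ (-α))⁻¹ :=
  inv_pos.2 (sub_pos.2 (two_rpow_neg_lt_one h0))

lemma schurC_pos (n : ℕ) {α : ℝ} (h0 : 0 < α) : 0 < schurC n α := by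
  have := geoC_pos h0
  have := omg_pos n
  unfold schurC; positivity

lemma schur_row (hn : 0 < n) (h0 : 0 < α) (h1 : α ≤ 1) {φ : ℤ × (Fin n → ℤ) → Rn n → ℝ}
    (hφ : ∀ i, φ i ∈ Calpha n α) (J : Finset (ℤ × (Fin n → ℤ))) (i : ℤ × (Fin n → ℤ)) :
    ∑ j ∈ J, latR j ^ n * |∫ z, dil (φ i) (latY i) (latR i) z * dil (φ j) (latY j) (latR j) z| ≤
      schurC n α := by
  have hw := omg_pos n
  have hi := latR_pos i
  set c := (1 - (2 : ℝ) ^ (-α))⁻¹ with hc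
  set κ := fun j => latR j ^ n *
    |∫ z, dil (φ i) (latY i) (latR i) z * dil (φ j) (latY j) (latR j) z| with hκ
  have hκ0 : ∀ j, 0 ≤ κ j := fun j => mul_nonneg (pow_nonneg (latR_pos j).le _) (abs_nonneg _)
  set J1 := J.filter fun j => latR j ≤ latR i ∧ dist (latY i) (latY j) ≤ 2 * latR i with hJ1
  set J2 := J.filter fun j => latR i ≤ latR j ∧ dist (latY i) (latY j) ≤ 2 * latR j with hJ2
  have hsplit : ∑ j ∈ J, κ j ≤ ∑ j ∈ J1, κ j + ∑ j ∈ J2, κ j := by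
    rw [hJ1, hJ2, Finset.sum_filter, Finset.sum_filter, ← Finset.sum_add_distrib]
    refine Finset.sum_le_sum fun j _ => ?_
    by_cases hd : latR i + latR j < dist (latY i) (latY j)
    · have : κ j = 0 := by
        rw [hκ]; simp only
        rw [dil_inner_eq_zero (hφ i) (hφ j) hi (latR_pos j) hd]; simp
      simp [this]
    · push Not at hd
      rcases le_total (latR j) (latR i) with h | h
      · rw [if_pos ⟨h, by linarith⟩]
        have : 0 ≤ if latR i ≤ latR j ∧ dist (latY i) (latY j) ≤ 2 * latR j then κ j else 0 := by
          split_ifs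
          · exact hκ0 j
          · exact le_rfl
        linarith
      · rw [if_pos (c := latR i ≤ latR j ∧ _) ⟨h, by linarith⟩]
        have : 0 ≤ if latR j ≤ latR i ∧ dist (latY i) (latY j) ≤ 2 * latR i then κ j else 0 := by
          split_ifs
          · exact hκ0 j
          · exact le_rfl
        linarith
  have hs1 : ∑ j ∈ J1, κ j ≤ 3 * omg n * ((2 * 2 * (n + 2) + 1) ^ n * c) := by
    have h2 := lat_sum_small h0 J1 (latY i) (c := 2) (B := latR i) (by norm_num) hi
      (fun j hj => (Finset.mem_filter.1 hj).2.2) (fun j hj => (Finset.mem_filter.1 hj).2.1)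
    calc ∑ j ∈ J1, κ j ≤ ∑ j ∈ J1, 3 * omg n * (latR i ^ n)⁻¹ *
            (latR j ^ n * (latR j / latR i) ^ α) := by
          refine Finset.sum_le_sum fun j _ => ?_
          have hj := latR_pos j
          have h3 := dil_inner_le hn h0 h1 (hφ j) (hφ i) (y := latY j) (y' := latY i) hj hi
          simp_rw [mul_comm (dil (φ j) _ _ _)] at h3
          calc κ j ≤ latR j ^ n * (3 * omg n * ((latR i ^ n)⁻¹ * (latR j / latR i) ^ α)) := by
                rw [hκ]; simp only; gcongr
            _ = _ := by ring
      _ = 3 * omg n * (latR i ^ n)⁻¹ * ∑ j ∈ J1, (latR j ^ n * (latR j / latR i) ^ α) := by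
          rw [Finset.mul_sum]
      _ ≤ 3 * omg n * (latR i ^ n)⁻¹ * (((2 * 2 * (n + 2) + 1) * latR i) ^ n * c) := by gcongr
      _ = _ := by rw [mul_pow]; field_simp
  have hs2 : ∑ j ∈ J2, κ j ≤ 3 * omg n * ((2 * 2 * (n + 2) + 1) ^ n * c) := by
    have h2 := lat_sum_large h0 J2 (latY i) (c := 2) (B := latR i) (by norm_num) hi
      (fun j hj => (Finset.mem_filter.1 hj).2.2) (fun j hj => (Finset.mem_filter.1 hj).2.1)
    calc ∑ j ∈ J2, κ j ≤ ∑ j ∈ J2, 3 * omg n * (latR i / latR j) ^ α := by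
          refine Finset.sum_le_sum fun j _ => ?_
          have hj := latR_pos j
          have h3 := dil_inner_le hn h0 h1 (hφ i) (hφ j) (y := latY i) (y' := latY j) hi hj
          calc κ j ≤ latR j ^ n * (3 * omg n * ((latR j ^ n)⁻¹ * (latR i / latR j) ^ α)) := by
                rw [hκ]; simp only; gcongr
            _ = _ := by field_simp
      _ = 3 * omg n * ∑ j ∈ J2, (latR i / latR j) ^ α := by rw [Finset.mul_sum]
      _ ≤ _ := by gcongr
  refine (hsplit.trans (add_le_add hs1 hs2)).trans_eq ?_
  rw [schurC]; ring

lemma dil_locInt (h0 : 0 < α) {φ : Rn n → ℝ} (hφ : φ ∈ Calpha n α) (y : Rn n) (t : ℝ) :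
    LocallyIntegrable (dil φ y t) volume := (dil_continuous h0 hφ).locallyIntegrable

/-- The `L²` bound for sums of kernels, by Schur's test. -/
lemma schur (hn : 0 < n) (h0 : 0 < α) (h1 : α ≤ 1) {φ : ℤ × (Fin n → ℤ) → Rn n → ℝ}
    (hφ : ∀ i, φ i ∈ Calpha n α) (J : Finset (ℤ × (Fin n → ℤ))) (a : ℤ × (Fin n → ℤ) → ℝ) :
    Integrable (fun z => (∑ i ∈ J, a i * latR i ^ n * dil (φ i) (latY i) (latR i) z) ^ 2) ∧
    ∫ z, (∑ i ∈ J, a i * latR i ^ n * dil (φ i) (latY i) (latR i) z) ^ 2 ≤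
      schurC n α * ∑ i ∈ J, a i ^ 2 * latR i ^ n := by
  set g := fun i => dil (φ i) (latY i) (latR i) with hg
  have hint : ∀ i j, Integrable fun z => a i * latR i ^ n * (a j * latR j ^ n) * (g i z * g j z) :=
    fun i j => (dil_mul_integrable hn h0 h1 (hφ i) (latR_pos i)
      (dil_locInt h0 (hφ j) _ _)).const_mul _
  have e : ∀ z, (∑ i ∈ J, a i * latR i ^ n * g i z) ^ 2 =
      ∑ i ∈ J, ∑ j ∈ J, a i * latR i ^ n * (a j * latR j ^ n) * (g i z * g j z) := by
    intro z
    rw [sq, Finset.sum_mul_sum]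
    refine Finset.sum_congr rfl fun i _ => Finset.sum_congr rfl fun j _ => by ring
  change Integrable (fun z => (∑ i ∈ J, a i * latR i ^ n * g i z) ^ 2) ∧
    ∫ z, (∑ i ∈ J, a i * latR i ^ n * g i z) ^ 2 ≤ _
  simp_rw [e]
  have hI : ∀ i ∈ J, Integrable fun z => ∑ j ∈ J,
      a i * latR i ^ n * (a j * latR j ^ n) * (g i z * g j z) :=
    fun i _ => integrable_finsetSum _ fun j _ => hint i j
  refine ⟨integrable_finsetSum _ hI, ?_⟩
  rw [integral_finsetSum _ hI]
  simp_rw [integral_finsetSum J fun j _ => hint _ j, integral_const_mul]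
  set κ := fun i j => |∫ z, g i z * g j z| with hκ
  have hT : ∀ i, 0 < latR i ^ n := fun i : ℤ × (Fin n → ℤ) => pow_pos (latR_pos i) n
  have hsymm : ∀ i j, κ i j = κ j i := fun i j => by
    rw [hκ]; simp only; simp_rw [mul_comm (g i _)]
  calc _ ≤ ∑ i ∈ J, ∑ j ∈ J, (a i ^ 2 / 2 * (latR i ^ n * latR j ^ n * κ i j) +
        a j ^ 2 / 2 * (latR i ^ n * latR j ^ n * κ i j)) := by
        refine Finset.sum_le_sum fun i _ => Finset.sum_le_sum fun j _ => ?_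
        have h2 : a i * a j * (∫ z, g i z * g j z) ≤ (a i ^ 2 / 2 + a j ^ 2 / 2) * κ i j := by
          refine (le_abs_self _).trans ?_
          rw [abs_mul]
          gcongr
          rw [abs_mul]
          nlinarith [sq_nonneg (|a i| - |a j|), sq_abs (a i), sq_abs (a j)]
        have h3 := mul_le_mul_of_nonneg_left h2 (mul_pos (hT i) (hT j)).le
        calc _ = latR i ^ n * latR j ^ n * (a i * a j * (∫ z, g i z * g j z)) := by ring
          _ ≤ _ := h3
          _ = _ := by ring
    _ = ∑ i ∈ J, ∑ j ∈ J, a i ^ 2 * (latR i ^ n * latR j ^ n * κ i j) := by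
        simp_rw [Finset.sum_add_distrib]
        rw [Finset.sum_comm (f := fun i j => a j ^ 2 / 2 * (latR i ^ n * latR j ^ n * κ i j)),
          ← Finset.sum_add_distrib]
        refine Finset.sum_congr rfl fun i _ => ?_
        rw [← Finset.sum_add_distrib]
        refine Finset.sum_congr rfl fun j _ => ?_
        rw [hsymm j i]; ring
    _ = ∑ i ∈ J, a i ^ 2 * latR i ^ n * ∑ j ∈ J, latR j ^ n * κ i j := by
        refine Finset.sum_congr rfl fun i _ => ?_
        rw [Finset.mul_sum]
        refine Finset.sum_congr rfl fun j _ => by ring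
    _ ≤ ∑ i ∈ J, a i ^ 2 * latR i ^ n * schurC n α := by
        refine Finset.sum_le_sum fun i _ => ?_
        have := hT i
        gcongr
        exact schur_row hn h0 h1 hφ J i
    _ = _ := by rw [← Finset.sum_mul, mul_comm]

end orth

/-! ### The discrete good-set estimate -/

section core
variable {n : ℕ} {α : ℝ}

lemma coef_bound (hn : 0 < n) (h1 : α ≤ 1) {f : Rn n → ℝ} (hf : Integrable f volume)
    {G : Set (Rn n)} {lam : ℝ} (hlam : 0 ≤ lam)
    (hG : ∀ x ∈ G, ∀ r : ℝ, 0 < r → ∫⁻ z in ball x r, ‖f z‖ₑ ≤ ENNReal.ofReal (lam * r ^ n))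
    {φ : Rn n → ℝ} (hφ : φ ∈ Calpha n α) {y : Rn n} {t : ℝ} (ht : 0 < t)
    (hy : ∃ x ∈ G, dist x y < t) : |∫ z, dil φ y t z * f z| ≤ 3 * 3 ^ n * lam := by
  obtain ⟨x, hx, hxy⟩ := hy
  refine (abs_integral_dil_le hn h1 hφ ht hf.locallyIntegrable).trans ?_
  have h2 : ∫ z in closedBall y t, |f z| ≤ lam * (3 * t) ^ n := by
    have e : ∫ z in closedBall y t, |f z| = (∫⁻ z in closedBall y t, ‖f z‖ₑ).toReal := by
      simp_rw [← Real.norm_eq_abs]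
      exact integral_norm_eq_lintegral_enorm hf.1.restrict
    rw [e]
    refine ENNReal.toReal_le_of_le_ofReal (by positivity) ?_
    refine (lintegral_mono_set ?_).trans (hG x hx (3 * t) (by linarith))
    intro z hz
    rw [mem_closedBall] at hz
    rw [mem_ball]
    have := dist_triangle_right z x y
    linarith
  calc _ ≤ 3 * (t ^ n)⁻¹ * (lam * (3 * t) ^ n) := by gcongr
    _ = _ := by rw [mul_pow]; field_simp

/-- At the scale `ρ z`, which is smaller than the radii of all kernels seen from `z`, a sum of
kernels with bounded coefficients oscillates boundedly. -/
lemma osc (h0 : 0 < α) {φ : ℤ × (Fin n → ℤ) → Rn n → ℝ}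
    (hφ : ∀ i, φ i ∈ Calpha n α) (J : Finset (ℤ × (Fin n → ℤ))) (a : ℤ × (Fin n → ℤ) → ℝ)
    {M : ℝ} (hM : 0 ≤ M) (ha : ∀ i ∈ J, |a i| ≤ M) {ρ : Rn n → ℝ} (hρ0 : ∀ z, 0 < ρ z)
    (hρL : ∀ z w, |ρ z - ρ w| ≤ dist z w / 2)
    (hρJ : ∀ i ∈ J, ∀ z, dist z (latY i) ≤ latR i → 2 * ρ z ≤ 3 * latR i)
    {z w : Rn n} (hzw : dist z w < ρ z) :
    |(∑ i ∈ J, a i * latR i ^ n * dil (φ i) (latY i) (latR i) z) -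
      ∑ i ∈ J, a i * latR i ^ n * dil (φ i) (latY i) (latR i) w| ≤
      M * (3 ^ α * ((2 * 4 * (n + 2) + 1) ^ n * (1 - (2 : ℝ) ^ (-α))⁻¹)) := by
  set J' := J.filter fun i => dist z (latY i) ≤ 4 * latR i ∧ ρ z / 3 ≤ latR i with hJ'
  have hz := hρ0 z
  rw [← Finset.sum_sub_distrib]
  calc _ ≤ ∑ i ∈ J, |a i * latR i ^ n * dil (φ i) (latY i) (latR i) z -
        a i * latR i ^ n * dil (φ i) (latY i) (latR i) w| := Finset.abs_sum_le_sum_abs _ _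
    _ = ∑ i ∈ J', |a i * latR i ^ n * dil (φ i) (latY i) (latR i) z -
        a i * latR i ^ n * dil (φ i) (latY i) (latR i) w| := by
        symm
        refine Finset.sum_subset (Finset.filter_subset _ _) fun i hi hi' => ?_
        have hR := latR_pos i
        -- a kernel which does not vanish at both points has index in `J'`
        have hz0 : latR i < dist z (latY i) := by
          by_contra! hc
          exact hi' (Finset.mem_filter.2 ⟨hi, by linarith, by linarith [hρJ i hi z hc]⟩)
        have hw0 : latR i < dist w (latY i) := by
          by_contra! hc
          have h2 := hρJ i hi w hc
          have h3 := (abs_le.1 (hρL z w)).2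
          have h4 := dist_triangle z w (latY i)
          exact hi' (Finset.mem_filter.2 ⟨hi, by linarith, by linarith⟩)
        rw [dil_eq_zero (hφ i) hR hz0, dil_eq_zero (hφ i) hR hw0]; simp
    _ ≤ ∑ i ∈ J', M * (3 ^ α * (ρ z / 3 / latR i) ^ α) := by
        refine Finset.sum_le_sum fun i hi => ?_
        have hR := latR_pos i
        rw [← mul_sub, abs_mul, abs_mul, abs_of_pos (pow_pos hR n), mul_assoc]
        refine mul_le_mul (ha i (Finset.mem_filter.1 hi).1) ?_ (by positivity) hM
        calc _ ≤ latR i ^ n * ((latR i ^ n)⁻¹ * (dist z w / latR i) ^ α) := by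
              gcongr; exact dil_holder (hφ i) hR z w
          _ = (dist z w / latR i) ^ α := by field_simp
          _ ≤ (3 * (ρ z / 3 / latR i)) ^ α := by
              refine Real.rpow_le_rpow (by positivity) ?_ h0.le
              calc dist z w / latR i ≤ ρ z / latR i := by gcongr
                _ = _ := by ring
          _ = _ := Real.mul_rpow (by norm_num) (by positivity)
    _ ≤ _ := by
        rw [← Finset.mul_sum, ← Finset.mul_sum]
        gcongr
        exact lat_sum_large h0 J' z (by norm_num) (by positivity)
          (fun i hi => (Finset.mem_filter.1 hi).2.1) (fun i hi => (Finset.mem_filter.1 hi).2.2)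

/-- The kernel `(z, w) ↦ 1_{B(z, ρ z)}(w) / |B(z, ρ z)|` of the averaging operator at scale `ρ`. -/
def avK (ρ : Rn n → ℝ) (p : Rn n × Rn n) : ENNReal :=
  {p : Rn n × Rn n | dist p.2 p.1 < ρ p.1}.indicator
    (fun p => (ENNReal.ofReal (ρ p.1 ^ n) * ballVol n)⁻¹) p

lemma measurable_avK {ρ : Rn n → ℝ} (hρ : Continuous ρ) : Measurable (avK ρ) := by
  refine Measurable.indicator (by fun_prop) ?_
  exact measurableSet_lt (by fun_prop) (by fun_prop)

lemma lintegral_avK {ρ : Rn n → ℝ} (hρ0 : ∀ z, 0 < ρ z) (z : Rn n) :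
    ∫⁻ w, avK ρ (z, w) = 1 := by
  have e : ∀ w, avK ρ (z, w) = (ball z (ρ z)).indicator
    (fun _ => (ENNReal.ofReal (ρ z ^ n) * ballVol n)⁻¹) w := fun w => rfl
  simp_rw [e]
  rw [lintegral_indicator measurableSet_ball, setLIntegral_const, vol_ball z (hρ0 z)]
  have := hρ0 z
  refine ENNReal.inv_mul_cancel (mul_ne_zero ?_ (ballVol_pos n).ne')
    (ENNReal.mul_ne_top ENNReal.ofReal_ne_top (ballVol_ne_top n))
  simp; positivity

/-- The adjoint of the averaging operator at scale `ρ`, applied to `|f|`. -/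
def avF (ρ f : Rn n → ℝ) (w : Rn n) : ENNReal := ∫⁻ z, ‖f z‖ₑ * avK ρ (z, w)

lemma lintegral_avF {ρ f : Rn n → ℝ} (hρ : Continuous ρ)
    (hf : AEStronglyMeasurable f) {u : Rn n → ENNReal} (hu : Measurable u) :
    ∫⁻ w, avF ρ f w * u w = ∫⁻ z, ‖f z‖ₑ * ∫⁻ w, avK ρ (z, w) * u w := by
  have hm := measurable_avK hρ
  have h1 : ∀ w, avF ρ f w * u w = ∫⁻ z, ‖f z‖ₑ * avK ρ (z, w) * u w := fun w =>
    (lintegral_mul_const'' _ (hf.enorm.mul (hm.comp measurable_prodMk_right).aemeasurable)).symm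
  simp_rw [h1]
  rw [lintegral_lintegral_swap]
  · refine lintegral_congr fun z => ?_
    simp_rw [mul_assoc]
    exact lintegral_const_mul _ ((hm.comp measurable_prodMk_left).mul hu)
  · have e1 : AEMeasurable (fun p : Rn n × Rn n => ‖f p.2‖ₑ) (volume.prod volume) :=
      hf.comp_snd.enorm
    have e2 : Measurable fun p : Rn n × Rn n => avK ρ (p.2, p.1) := hm.comp measurable_swap
    exact (e1.mul e2.aemeasurable).mul (hu.comp measurable_fst).aemeasurable

/-- If `h` oscillates by at most `E` on the balls `B(z, ρ z)`, then `|f|` may be replaced by its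
average in `∫ |f| |h|` up to an error `E ‖f‖₁`. -/
lemma lintegral_le_avF {ρ f h : Rn n → ℝ} (hρ : Continuous ρ) (hρ0 : ∀ z, 0 < ρ z)
    (hf : AEStronglyMeasurable f) (hh : Continuous h) {E : ℝ}
    (hE : ∀ z w, dist z w < ρ z → |h z - h w| ≤ E) :
    ∫⁻ z, ‖f z‖ₑ * ‖h z‖ₑ ≤ ENNReal.ofReal E * (∫⁻ z, ‖f z‖ₑ) + ∫⁻ w, avF ρ f w * ‖h w‖ₑ := by
  have hm := measurable_avK hρ
  have hm1 : ∀ z, Measurable fun w => avK ρ (z, w) := fun z => hm.comp measurable_prodMk_left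
  rw [lintegral_avF hρ hf hh.measurable.enorm, ← lintegral_const_mul'' _ hf.enorm,
    ← lintegral_add_left' (hf.enorm.const_mul _)]
  refine lintegral_mono fun z => ?_
  rw [mul_comm (ENNReal.ofReal E), ← mul_add]
  gcongr
  calc ‖h z‖ₑ = ∫⁻ w, avK ρ (z, w) * ‖h z‖ₑ := by
        rw [lintegral_mul_const _ (hm1 z), lintegral_avK hρ0, one_mul]
    _ ≤ ∫⁻ w, (avK ρ (z, w) * ENNReal.ofReal E + avK ρ (z, w) * ‖h w‖ₑ) := by
        refine lintegral_mono fun w => ?_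
        by_cases hw : dist w z < ρ z
        · rw [← mul_add]
          gcongr
          have h2 := hE z w (by rwa [dist_comm])
          rw [Real.enorm_eq_ofReal_abs, Real.enorm_eq_ofReal_abs,
            ← ENNReal.ofReal_add ((abs_nonneg _).trans h2) (abs_nonneg _)]
          apply ENNReal.ofReal_le_ofReal
          have := abs_sub_abs_le_abs_sub (h z) (h w)
          linarith
        · have : avK ρ (z, w) = 0 := indicator_of_notMem (by exact hw) _
          simp [this]
    _ = _ := by
        rw [lintegral_add_left ((hm1 z).mul_const _), lintegral_mul_const _ (hm1 z),
          lintegral_avK hρ0, one_mul]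

lemma avF_le {ρ f : Rn n → ℝ} (hρ0 : ∀ z, 0 < ρ z) (hρL : ∀ z w, |ρ z - ρ w| ≤ dist z w / 2)
    {G : Set (Rn n)} {lam : ℝ} (hlam : 0 ≤ lam) (hG0 : ∀ w, ∃ x ∈ G, dist w x < 2 * ρ w)
    (hG : ∀ x ∈ G, ∀ r : ℝ, 0 < r → ∫⁻ z in ball x r, ‖f z‖ₑ ≤ ENNReal.ofReal (lam * r ^ n))
    (w : Rn n) : avF ρ f w ≤ ENNReal.ofReal (lam * 6 ^ n / omg n) := by
  have hw := hρ0 w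
  have hom := omg_pos n
  obtain ⟨x, hx, hwx⟩ := hG0 w
  set c := ENNReal.ofReal ((2 / 3 * ρ w) ^ n * omg n)⁻¹ with hc
  have h1 : ∀ z, ‖f z‖ₑ * avK ρ (z, w) ≤ (ball x (4 * ρ w)).indicator (fun z => ‖f z‖ₑ * c) z := by
    intro z
    by_cases hz : dist w z < ρ z
    · have h2 := (abs_le.1 (hρL z w)).2
      have h3 := (abs_le.1 (hρL z w)).1
      rw [dist_comm z w] at h2 h3
      have hzx : z ∈ ball x (4 * ρ w) := by
        rw [mem_ball]
        have := dist_triangle z w x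
        rw [dist_comm z w] at this
        linarith
      rw [indicator_of_mem hzx, avK, indicator_of_mem (by exact hz)]
      have hz0 := hρ0 z
      gcongr
      rw [← ofReal_omg, ← ENNReal.ofReal_mul (by positivity),
        ← ENNReal.ofReal_inv_of_pos (by positivity), hc]
      apply ENNReal.ofReal_le_ofReal
      gcongr
      linarith
    · have : avK ρ (z, w) = 0 := indicator_of_notMem (by exact hz) _
      rw [this, mul_zero]; exact zero_le
  calc avF ρ f w ≤ ∫⁻ z, (ball x (4 * ρ w)).indicator (fun z => ‖f z‖ₑ * c) z := lintegral_mono h1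
    _ = (∫⁻ z in ball x (4 * ρ w), ‖f z‖ₑ) * c := by
        rw [lintegral_indicator measurableSet_ball, lintegral_mul_const' _ _ ENNReal.ofReal_ne_top]
    _ ≤ ENNReal.ofReal (lam * (4 * ρ w) ^ n) * c := by
        gcongr; exact hG x hx _ (by positivity)
    _ = _ := by
        rw [hc, ← ENNReal.ofReal_mul (by positivity)]
        congr 1
        rw [show 4 * ρ w = 6 * (2 / 3 * ρ w) by ring, mul_pow 6]
        field_simp

/-- The oscillation constant. -/
def oscC (n : ℕ) (α : ℝ) : ℝ :=
  3 * 3 ^ n * (3 ^ α * ((2 * 4 * (n + 2) + 1) ^ n * (1 - (2 : ℝ) ^ (-α))⁻¹))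

/-- The constant in the discrete good-set estimate. -/
def coreC (n : ℕ) (α : ℝ) : ℝ := 8 * (oscC n α + schurC n α * (6 ^ n / omg n) / 2)

lemma coreC_nonneg (n : ℕ) (h0 : 0 < α) : 0 ≤ coreC n α := by
  have := geoC_pos h0
  have := schurC_pos n h0
  have := omg_pos n
  unfold coreC oscC; positivity

lemma mul_enorm_le {u : ENNReal} {B K v : ℝ} (hK : 0 < K) (hB : 0 ≤ B)
    (hu : u ≤ ENNReal.ofReal B) :
    u * ‖v‖ₑ ≤ ENNReal.ofReal (K * B / 2) * u + ENNReal.ofReal (v ^ 2 / (2 * K)) := by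
  obtain ⟨r, hr, rfl⟩ : ∃ r : ℝ, 0 ≤ r ∧ u = ENNReal.ofReal r :=
    ⟨u.toReal, ENNReal.toReal_nonneg, (ENNReal.ofReal_toReal (hu.trans_lt ENNReal.ofReal_lt_top).ne).symm⟩
  rw [ENNReal.ofReal_le_ofReal_iff hB] at hu
  rw [Real.enorm_eq_ofReal_abs, ← ENNReal.ofReal_mul hr, ← ENNReal.ofReal_mul (by positivity),
    ← ENNReal.ofReal_add (by positivity) (by positivity)]
  apply ENNReal.ofReal_le_ofReal
  have h1 : r * |v| ≤ K * r * r / 2 + v ^ 2 / (2 * K) := by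
    have h2 : 0 ≤ (K * r - |v|) ^ 2 / (2 * K) := by positivity
    have h3 : (K * r - |v|) ^ 2 / (2 * K) = K * r * r / 2 + v ^ 2 / (2 * K) - r * |v| := by
      rw [sub_sq, sq_abs]; field_simp; ring
    linarith
  have h4 : K * r * r / 2 ≤ K * B / 2 * r := by
    have : K * r * r ≤ K * r * B := by gcongr
    linarith
  linarith

/-- The discrete good-set estimate: the lattice points whose balls meet a set on which the
averages of `|f|` are at most `lam` carry at most `C lam ‖f‖₁` of the square function. -/
lemma core (hn : 0 < n) (h0 : 0 < α) (h1 : α ≤ 1) {f : Rn n → ℝ} (hf : Integrable f volume)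
    {G : Set (Rn n)} {lam : ℝ} (hlam : 0 ≤ lam)
    (hG : ∀ x ∈ G, ∀ r : ℝ, 0 < r → ∫⁻ z in ball x r, ‖f z‖ₑ ≤ ENNReal.ofReal (lam * r ^ n))
    (J : Finset (ℤ × (Fin n → ℤ))) (hJ : ∀ i ∈ J, ∃ x ∈ G, dist x (latY i) < latR i) :
    ∑ i ∈ J, Aalpha α f (latY i) (latR i) ^ 2 * latR i ^ n ≤
      coreC n α * lam * (∫⁻ z, ‖f z‖ₑ).toReal := by
  have hS := schurC_pos n h0
  have hom := omg_pos n
  have hN : ∫⁻ z, ‖f z‖ₑ ≠ ⊤ := hf.2.ne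
  rcases J.eq_empty_or_nonempty with rfl | hne
  · have := coreC_nonneg n h0
    simp only [Finset.sum_empty]; positivity
  have hGne : G.Nonempty := by
    obtain ⟨i, hi⟩ := hne
    obtain ⟨x, hx, -⟩ := hJ i hi
    exact ⟨x, hx⟩
  choose φ hφ hφA using fun i : ℤ × (Fin n → ℤ) =>
    exists_half_Aalpha (α := α) (f := f) (y := latY i) (t := latR i)
  set a := fun i => ∫ z, dil (φ i) (latY i) (latR i) z * f z with ha
  set h := fun z => ∑ i ∈ J, a i * latR i ^ n * dil (φ i) (latY i) (latR i) z with hh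
  set X := ∑ i ∈ J, a i ^ 2 * latR i ^ n with hX
  obtain ⟨i0, hi0, hmin⟩ := J.exists_min_image latR hne
  -- twice the scale is the distance to `G` plus the smallest radius in the family
  set ρ := fun z => (infDist z G + latR i0) / 2 with hρ
  have hR0 := latR_pos i0
  have hρc : Continuous ρ := by
    have := continuous_infDist_pt G
    rw [hρ]; fun_prop
  have hρ0 : ∀ z, 0 < ρ z := fun z => by
    have := infDist_nonneg (x := z) (s := G)
    rw [hρ]; simp only; positivity
  have hρL : ∀ z w, |ρ z - ρ w| ≤ dist z w / 2 := fun z w => by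
    have h2 := infDist_le_infDist_add_dist (s := G) (x := z) (y := w)
    have h3 := infDist_le_infDist_add_dist (s := G) (x := w) (y := z)
    rw [dist_comm w z] at h3
    rw [hρ, abs_le]; simp only
    constructor <;> linarith
  have hρJ : ∀ i ∈ J, ∀ z, dist z (latY i) ≤ latR i → 2 * ρ z ≤ 3 * latR i := fun i hi z hz => by
    obtain ⟨x, hx, hxy⟩ := hJ i hi
    have h2 := infDist_le_dist_of_mem (x := z) hx
    have h3 := dist_triangle_right z x (latY i)
    have h4 := hmin i hi
    rw [hρ]; simp only; linarith
  have hG0 : ∀ w, ∃ x ∈ G, dist w x < 2 * ρ w := fun w =>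
    (infDist_lt_iff hGne).1 (by rw [hρ]; simp only; linarith)
  have hab : ∀ i ∈ J, |a i| ≤ 3 * 3 ^ n * lam := fun i hi =>
    coef_bound hn h1 hf hlam hG (hφ i) (latR_pos i) (hJ i hi)
  have hE : ∀ z w, dist z w < ρ z → |h z - h w| ≤ oscC n α * lam := fun z w hzw =>
    (osc h0 hφ J a (by positivity) hab hρ0 hρL hρJ hzw).trans_eq (by rw [oscC]; ring)
  have hhc : Continuous h := continuous_finsetSum _ fun i _ =>
    continuous_const.mul (dil_continuous h0 (hφ i))
  obtain ⟨hh2i, hh2⟩ := schur hn h0 h1 hφ J a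
  have hXf : X = ∫ z, h z * f z := by
    have e : ∀ z, h z * f z = ∑ i ∈ J, a i * latR i ^ n * (dil (φ i) (latY i) (latR i) z * f z) := by
      intro z
      rw [hh]; simp only
      rw [Finset.sum_mul]
      exact Finset.sum_congr rfl fun i _ => by ring
    simp_rw [e]
    rw [integral_finsetSum _ fun i _ => (dil_mul_integrable hn h0 h1 (hφ i) (latR_pos i)
      hf.locallyIntegrable).const_mul _]
    refine Finset.sum_congr rfl fun i _ => ?_
    rw [integral_const_mul, sq]
    change a i * a i * _ = a i * _ * a i
    ring
  have hX0 : 0 ≤ X := Finset.sum_nonneg fun i _ =>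
    mul_nonneg (sq_nonneg _) (pow_nonneg (latR_pos i).le _)
  set B := lam * 6 ^ n / omg n with hB
  have hB0 : 0 ≤ B := by positivity
  set N := ∫⁻ z, ‖f z‖ₑ with hNd
  have hosc0 : 0 ≤ oscC n α := by
    have := geoC_pos h0
    unfold oscC; positivity
  have main : ENNReal.ofReal X ≤ ENNReal.ofReal (oscC n α * lam) * N +
      (ENNReal.ofReal (schurC n α * B / 2) * N + ENNReal.ofReal (X / 2)) := by
    calc ENNReal.ofReal X = ‖X‖ₑ := (Real.enorm_of_nonneg hX0).symm
      _ ≤ ∫⁻ z, ‖h z * f z‖ₑ := by rw [hXf]; exact enorm_integral_le_lintegral_enorm _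
      _ = ∫⁻ z, ‖f z‖ₑ * ‖h z‖ₑ := by simp_rw [enorm_mul, mul_comm]
      _ ≤ ENNReal.ofReal (oscC n α * lam) * N + ∫⁻ w, avF ρ f w * ‖h w‖ₑ :=
          lintegral_le_avF hρc hρ0 hf.1 hhc hE
      _ ≤ _ := by
          gcongr
          calc ∫⁻ w, avF ρ f w * ‖h w‖ₑ ≤ ∫⁻ w, (ENNReal.ofReal (schurC n α * B / 2) * avF ρ f w +
                ENNReal.ofReal (h w ^ 2 / (2 * schurC n α))) := lintegral_mono fun w =>
                mul_enorm_le hS hB0 (avF_le hρ0 hρL hlam hG0 hG w)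
            _ = ENNReal.ofReal (schurC n α * B / 2) * N +
                ∫⁻ w, ENNReal.ofReal (h w ^ 2 / (2 * schurC n α)) := by
                have e1 := lintegral_avF hρc hf.1 (u := fun _ => 1) measurable_const
                simp only [mul_one, lintegral_avK hρ0] at e1
                rw [lintegral_add_right' _ (by fun_prop),
                  lintegral_const_mul' _ _ ENNReal.ofReal_ne_top, e1]
            _ ≤ _ := by
                gcongr
                rw [← ofReal_integral_eq_lintegral_ofReal (hh2i.div_const _)
                  (ae_of_all _ fun w => by positivity), integral_div]
                apply ENNReal.ofReal_le_ofReal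
                rw [div_le_div_iff₀ (by positivity) two_pos]
                calc _ ≤ (schurC n α * X) * 2 := by gcongr
                  _ = _ := by ring
  have hN2 : N = ENNReal.ofReal N.toReal := (ENNReal.ofReal_toReal hN).symm
  have hNr : 0 ≤ N.toReal := ENNReal.toReal_nonneg
  rw [hN2, ← ENNReal.ofReal_mul (by positivity), ← ENNReal.ofReal_mul (by positivity),
    ← ENNReal.ofReal_add (by positivity) (by positivity),
    ← ENNReal.ofReal_add (by positivity) (by positivity),
    ENNReal.ofReal_le_ofReal_iff (by positivity)] at main
  calc _ ≤ ∑ i ∈ J, 4 * (a i ^ 2 * latR i ^ n) := by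
        refine Finset.sum_le_sum fun i _ => ?_
        rw [← mul_assoc]
        have hR := latR_pos i
        gcongr
        have h2 := hφA i
        have h3 : 0 ≤ Aalpha α f (latY i) (latR i) := Aalpha_nonneg
        rw [← sq_abs (a i)]
        change _ ≤ |a i| at h2
        nlinarith [abs_nonneg (a i)]
    _ = 4 * X := by rw [← Finset.mul_sum]
    _ ≤ 4 * (2 * (oscC n α * lam * N.toReal + schurC n α * B / 2 * N.toReal)) := by linarith
    _ = _ := by rw [coreC, hB]; ring

end core

/-! ### Almost everywhere finiteness for integrable functions -/

section local_finiteness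
variable {n : ℕ} {α : ℝ}

/-- The integrand `A_α(f)(y,t)² / t^{n+1}` on the upper half space, extended by zero. -/
def sqF (α : ℝ) (f : Rn n → ℝ) : Rn n × ℝ → ENNReal :=
  {p : Rn n × ℝ | 0 < p.2}.indicator
    fun p => ENNReal.ofReal (Aalpha α f p.1 p.2 ^ 2 / p.2 ^ (n + 1))

lemma sqF_of_pos {f : Rn n → ℝ} {p : Rn n × ℝ} (hp : 0 < p.2) :
    sqF α f p = ENNReal.ofReal (Aalpha α f p.1 p.2 ^ 2 / p.2 ^ (n + 1)) :=
  indicator_of_mem (by exact hp) _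

lemma sqF_eq (f : Rn n → ℝ) : sqF α f = fun p : Rn n × ℝ => ENNReal.ofReal
    (({p : Rn n × ℝ | 0 < p.2}.indicator (fun p => Aalpha α f p.1 p.2) p) ^ 2 / p.2 ^ (n + 1)) := by
  ext p
  by_cases hp : 0 < p.2
  · rw [sqF_of_pos hp, indicator_of_mem (by exact hp)]
  · rw [sqF, indicator_of_notMem (by exact hp), indicator_of_notMem (by exact hp)]; simp

lemma measurable_sqF (hn : 0 < n) (h0 : 0 < α) (h1 : α ≤ 1) {f : Rn n → ℝ}
    (hf : LocallyIntegrable f volume) : Measurable (sqF α f) := by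
  rw [sqF_eq]
  have := measurable_Aalpha hn h0 h1 hf
  fun_prop

/-- The Whitney box attached to a lattice index. -/
def latW {n : ℕ} (i : ℤ × (Fin n → ℤ)) : Set (Rn n × ℝ) :=
  closedBall (latY i) (n * 2 ^ i.1) ×ˢ Ico ((2 : ℝ) ^ i.1) (2 ^ (i.1 + 1))

lemma measurableSet_latW (i : ℤ × (Fin n → ℤ)) : MeasurableSet (latW i) :=
  measurableSet_closedBall.prod measurableSet_Ico

lemma volume_latW (hn : 0 < n) (i : ℤ × (Fin n → ℤ)) :
    volume (latW i) = ENNReal.ofReal ((n * 2 ^ i.1) ^ n * omg n * 2 ^ i.1) := by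
  have h2 : (0 : ℝ) < 2 ^ i.1 := by positivity
  have hn' : (0 : ℝ) < n := by exact_mod_cast hn
  have := omg_pos n
  rw [latW, Measure.volume_eq_prod, Measure.prod_prod, vol_closedBall _ (by positivity),
    Real.volume_Ico, ← ofReal_omg, ← ENNReal.ofReal_mul (by positivity),
    ← ENNReal.ofReal_mul (by positivity), zpow_add_one₀ two_ne_zero]
  congr 1; ring

lemma cover_latW : {p : Rn n × ℝ | 0 < p.2} ⊆ ⋃ i, latW i := by
  rintro ⟨y, t⟩ (ht : 0 < t)
  obtain ⟨k, hk1, hk2⟩ := exists_mem_Ico_zpow ht (one_lt_two (α := ℝ))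
  have h2 : (0 : ℝ) < 2 ^ k := by positivity
  refine mem_iUnion.2 ⟨(k, fun l => ⌊y l / 2 ^ k⌋), ?_, hk1, hk2⟩
  rw [mem_closedBall, EuclideanSpace.dist_eq]
  refine Real.sqrt_le_iff.2 ⟨by positivity, ?_⟩
  calc _ ≤ ∑ _l : Fin n, ((2 : ℝ) ^ k) ^ 2 := by
        refine Finset.sum_le_sum fun l _ => ?_
        rw [Real.dist_eq, sq_abs, latY]
        simp only
        have h3 := Int.floor_le (y l / 2 ^ k)
        have h4 := Int.lt_floor_add_one (y l / 2 ^ k)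
        rw [le_div_iff₀ h2] at h3
        rw [div_lt_iff₀ h2] at h4
        refine sq_le_sq' ?_ ?_ <;> nlinarith
    _ = n * ((2 : ℝ) ^ k) ^ 2 := by simp
    _ ≤ _ := by
        rw [mul_pow]
        gcongr
        exact_mod_cast Nat.le_self_pow two_ne_zero n

/-- The constant comparing the integral over a Whitney box with one lattice term. -/
def boxC (n : ℕ) : ℝ := (((n : ℝ) + 2) ^ (n + 1)) ^ 2 * (omg n ^ 2 * 2 ^ n * n ^ n)

lemma boxC_nonneg (n : ℕ) : 0 ≤ boxC n := by
  have := omg_pos n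
  unfold boxC; positivity

lemma box_bound (hn : 0 < n) (h1 : α ≤ 1) {f : Rn n → ℝ} (hf : LocallyIntegrable f volume)
    (G : Set (Rn n)) (i : ℤ × (Fin n → ℤ)) :
    ∫⁻ p in latW i, sqF α f p * volume (G ∩ ball p.1 p.2) ≤
      {i | ∃ x ∈ G, dist x (latY i) < latR i}.indicator
        (fun i => ENNReal.ofReal (boxC n * (Aalpha α f (latY i) (latR i) ^ 2 * latR i ^ n))) i := by
  have hom := omg_pos n
  have h2 : (0 : ℝ) < 2 ^ i.1 := by positivity
  have e2 : (2 : ℝ) ^ (i.1 + 1) = 2 * 2 ^ i.1 := by rw [zpow_add_one₀ two_ne_zero, mul_comm]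
  by_cases hi : ∃ x ∈ G, dist x (latY i) < latR i
  · rw [indicator_of_mem (by exact hi)]
    set A := Aalpha α f (latY i) (latR i) with hA
    have hA0 : 0 ≤ A := Aalpha_nonneg
    calc _ ≤ ∫⁻ _ in latW i, ENNReal.ofReal ((((n + 2) ^ (n + 1) * A) ^ 2 / (2 ^ i.1) ^ (n + 1)) *
          ((2 * 2 ^ i.1) ^ n * omg n)) := by
          refine setLIntegral_mono measurable_const fun p hp => ?_
          obtain ⟨hp1, hp2, hp3⟩ := hp
          rw [mem_closedBall] at hp1
          have hp0 : 0 < p.2 := h2.trans_le hp2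
          rw [sqF_of_pos hp0, ENNReal.ofReal_mul (by positivity)]
          have hAp : 0 ≤ Aalpha α f p.1 p.2 := Aalpha_nonneg
          gcongr
          · have h3 := Aalpha_mono hn h1 hf hp0 (y' := latY i) (t' := latR i)
              (by rw [latR]; linarith)
            refine h3.trans ?_
            have hq : latR i / p.2 ≤ n + 2 := by
              rw [latR, div_le_iff₀ hp0]
              gcongr
            have hR := latR_pos i
            gcongr
          · rw [ENNReal.ofReal_mul (by positivity), ofReal_omg, ← vol_ball p.1 (by positivity)]
            refine measure_mono (inter_subset_right.trans (ball_subset_ball ?_))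
            linarith
      _ = ENNReal.ofReal (((((n + 2) ^ (n + 1) * A) ^ 2 / (2 ^ i.1) ^ (n + 1)) *
          ((2 * 2 ^ i.1) ^ n * omg n)) * ((n * 2 ^ i.1) ^ n * omg n * 2 ^ i.1)) := by
          rw [setLIntegral_const, volume_latW hn, ← ENNReal.ofReal_mul (by positivity)]
      _ ≤ _ := by
          apply ENNReal.ofReal_le_ofReal
          have hR : (2 : ℝ) ^ i.1 ≤ latR i := by
            rw [latR]
            nlinarith [show (0 : ℝ) ≤ n by positivity]
          calc _ = boxC n * (A ^ 2 * ((2 : ℝ) ^ i.1) ^ n) := by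
                rw [boxC, mul_pow, mul_pow, mul_pow, pow_succ ((2 : ℝ) ^ i.1)]; field_simp
            _ ≤ _ := by
                have := boxC_nonneg n
                gcongr
  · rw [indicator_of_notMem (by exact hi)]
    refine le_of_eq (setLIntegral_eq_zero (measurableSet_latW i) fun p hp => ?_)
    obtain ⟨hp1, hp2, hp3⟩ := hp
    rw [mem_closedBall] at hp1
    have : G ∩ ball p.1 p.2 = ∅ := by
      rw [eq_empty_iff_forall_notMem]
      rintro x ⟨hxG, hx⟩
      rw [mem_ball] at hx
      refine hi ⟨x, hxG, ?_⟩
      have := dist_triangle x p.1 (latY i)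
      rw [latR]; linarith
    simp [this]

/-- The good-set estimate: the square of the square function is integrable over a set on which
the averages of `|f|` are bounded. -/
lemma good_set (hn : 0 < n) (h0 : 0 < α) (h1 : α ≤ 1) {f : Rn n → ℝ} (hf : Integrable f volume)
    {G : Set (Rn n)} (hGm : MeasurableSet G) {lam : ℝ} (hlam : 0 ≤ lam)
    (hG : ∀ x ∈ G, ∀ r : ℝ, 0 < r → ∫⁻ z in ball x r, ‖f z‖ₑ ≤ ENNReal.ofReal (lam * r ^ n)) :
    ∫⁻ x, coneInt (sqF α f) 1 x * G.indicator 1 x < ⊤ := by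
  have hF := measurable_sqF hn h0 h1 hf.locallyIntegrable
  have hb := boxC_nonneg n
  rw [lintegral_coneInt_mul hF (measurable_one.indicator hGm)]
  have e : ∀ p : Rn n × ℝ, ∫⁻ x in ball p.1 (1 * p.2), G.indicator 1 x =
      volume (G ∩ ball p.1 p.2) := by
    intro p
    rw [one_mul, lintegral_indicator_one hGm, Measure.restrict_apply hGm]
  simp_rw [e]
  refine lt_of_le_of_lt ((lintegral_mono_set cover_latW).trans
    ((lintegral_iUnion_le _ _).trans (ENNReal.tsum_le_tsum fun i =>
      box_bound hn h1 hf.locallyIntegrable G i))) ?_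
  refine lt_of_le_of_lt (b := ENNReal.ofReal (boxC n * (coreC n α * lam * (∫⁻ z, ‖f z‖ₑ).toReal)))
    ?_ ENNReal.ofReal_lt_top
  rw [ENNReal.tsum_eq_iSup_sum]
  refine iSup_le fun J => ?_
  classical
  simp_rw [indicator_apply]
  rw [← Finset.sum_filter, ← ENNReal.ofReal_sum_of_nonneg fun i _ => mul_nonneg hb
    (mul_nonneg (sq_nonneg _) (pow_nonneg (latR_pos i).le _)), ← Finset.mul_sum]
  apply ENNReal.ofReal_le_ofReal
  gcongr
  exact core hn h0 h1 hf hlam hG _ fun i hi => (Finset.mem_filter.1 hi).2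

/-- For integrable `f` the square function is finite almost everywhere. -/
lemma ae_coneInt_lt_top (hn : 0 < n) (h0 : 0 < α) (h1 : α ≤ 1) {f : Rn n → ℝ}
    (hf : Integrable f volume) : ∀ᵐ x, coneInt (sqF α f) 1 x < ⊤ := by
  set u : Rn n → ENNReal := fun z => ‖hf.1.mk f z‖ₑ with hu
  have hum : Measurable u := hf.1.stronglyMeasurable_mk.measurable.enorm
  have hfu : (fun z => ‖f z‖ₑ) =ᵐ[volume] u := by
    filter_upwards [hf.1.ae_eq_mk] with z hz
    rw [hu]; simp only; rw [← hz]
  have hI : ∫⁻ z, u z ≠ ⊤ := by rw [← lintegral_congr_ae hfu]; exact hf.2.ne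
  have hfin : ∀ m : ℕ, ∀ᵐ x, coneInt (sqF α f) 1 x * {x | maxF u x ≤ m}.indicator 1 x < ⊤ := by
    intro m
    have hGm : MeasurableSet {x | maxF u x ≤ m} := measurableSet_le (measurable_maxF hum) measurable_const
    refine ae_lt_top ((measurable_coneInt (measurable_sqF hn h0 h1 hf.locallyIntegrable) 1).mul
      (measurable_one.indicator hGm)) (good_set hn h0 h1 hf hGm (lam := 2 ^ n * m)
        (by positivity) fun x hx r hr => ?_).ne
    rw [lintegral_congr_ae (ae_restrict_of_ae hfu)]
    calc _ ≤ ENNReal.ofReal ((2 * r) ^ n) * maxF u x := lintegral_ball_le_maxF u x hr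
      _ ≤ ENNReal.ofReal ((2 * r) ^ n) * m := by gcongr; exact hx
      _ = _ := by
          rw [← ENNReal.ofReal_natCast, ← ENNReal.ofReal_mul (by positivity), mul_pow]
          congr 1; ring
  filter_upwards [ae_all_iff.2 hfin, ae_maxF_lt_top hn hI] with x hx hxm
  obtain ⟨m, hm⟩ := ENNReal.exists_nat_gt hxm.ne
  have := hx m
  rwa [indicator_of_mem (by exact hm.le), Pi.one_apply, mul_one] at this

end local_finiteness

/-! ### Passage to locally integrable functions -/

section global
variable {n : ℕ} {α : ℝ}

lemma lintegral_comp_two_mul (g : ℝ → ENNReal) (hg : Measurable g) :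
    ∫⁻ t, g (2 * t) ≤ ∫⁻ t, g t := by
  have h := Real.smul_map_volume_mul_left (a := 2) two_ne_zero
  conv_rhs => rw [← h]
  rw [lintegral_smul_measure, lintegral_map hg (measurable_const_mul 2), smul_eq_mul]
  refine le_mul_of_one_le_left' ?_
  rw [abs_two, ← ENNReal.ofReal_one]
  exact ENNReal.ofReal_le_ofReal one_le_two

lemma lintegral_comp_two_mul_snd (g : Rn n × ℝ → ENNReal) (hg : Measurable g) :
    ∫⁻ p : Rn n × ℝ, g (p.1, 2 * p.2) ≤ ∫⁻ p, g p := by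
  have hg2 : Measurable fun p : Rn n × ℝ => g (p.1, 2 * p.2) := hg.comp (by fun_prop)
  rw [Measure.volume_eq_prod, lintegral_prod _ hg2.aemeasurable,
    lintegral_prod _ hg.aemeasurable]
  exact lintegral_mono fun y => lintegral_comp_two_mul _ (hg.comp measurable_prodMk_left)

/-- Large scales: seen from far above, the cone at `x` lies in the cone at `x₀` after doubling the
height. -/
lemma coneInt_high (hn : 0 < n) (h0 : 0 < α) (h1 : α ≤ 1) {f : Rn n → ℝ}
    (hf : LocallyIntegrable f volume) {x0 x : Rn n} {R : ℝ} (hR : 0 < R) (hx : dist x x0 < R) :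
    ∫⁻ p in {p : Rn n × ℝ | 0 < p.2 ∧ dist x p.1 < 1 * p.2} ∩ {p | R < p.2}, sqF α f p ≤
      ENNReal.ofReal (8 ^ (n + 1)) * coneInt (sqF α f) 1 x0 := by
  have hF := measurable_sqF hn h0 h1 hf
  set H := {p : Rn n × ℝ | 0 < p.2 ∧ dist x0 p.1 < 1 * p.2}.indicator (sqF α f) with hH
  have hHm : Measurable H := hF.indicator (measurableSet_cone 1 x0)
  calc _ ≤ ∫⁻ p in {p : Rn n × ℝ | 0 < p.2 ∧ dist x p.1 < 1 * p.2} ∩ {p | R < p.2},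
        ENNReal.ofReal (8 ^ (n + 1)) * H (p.1, 2 * p.2) := by
        refine setLIntegral_mono ((hHm.comp (by fun_prop)).const_mul _) ?_
        rintro ⟨y, t⟩ ⟨⟨ht, hxy⟩, hRt⟩
        simp only [one_mul] at ht hxy
        change R < t at hRt
        have hmem : (y, 2 * t) ∈ {p : Rn n × ℝ | 0 < p.2 ∧ dist x0 p.1 < 1 * p.2} := by
          refine ⟨by positivity, ?_⟩
          simp only
          have := dist_triangle x0 x y
          rw [dist_comm x0 x] at this
          linarith
        simp only
        rw [hH, indicator_of_mem hmem, sqF_of_pos (by exact ht), sqF_of_pos (by simpa using ht),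
          ← ENNReal.ofReal_mul (by positivity)]
        apply ENNReal.ofReal_le_ofReal
        simp only
        have h3 := Aalpha_mono (α := α) hn h1 hf ht (y := y) (y' := y) (t' := 2 * t)
          (by rw [dist_self]; linarith)
        rw [mul_div_assoc, div_self ht.ne', mul_one] at h3
        have hA : 0 ≤ Aalpha α f y t := Aalpha_nonneg
        calc _ ≤ (2 ^ (n + 1) * Aalpha α f y (2 * t)) ^ 2 / t ^ (n + 1) := by gcongr
          _ = _ := by
            rw [mul_pow, mul_pow 2 t, show (8 : ℝ) = 2 * 2 * 2 by norm_num, mul_pow, mul_pow]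
            field_simp
    _ ≤ ∫⁻ p : Rn n × ℝ, ENNReal.ofReal (8 ^ (n + 1)) * H (p.1, 2 * p.2) := setLIntegral_le_lintegral _ _
    _ = ENNReal.ofReal (8 ^ (n + 1)) * ∫⁻ p : Rn n × ℝ, H (p.1, 2 * p.2) :=
        lintegral_const_mul' _ _ ENNReal.ofReal_ne_top
    _ ≤ ENNReal.ofReal (8 ^ (n + 1)) * ∫⁻ p : Rn n × ℝ, H p :=
        mul_le_mul_right (lintegral_comp_two_mul_snd H hHm) _
    _ = _ := by rw [hH, lintegral_indicator (measurableSet_cone 1 x0)]; rfl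

/-- For locally integrable `f`, finiteness of the square function at one point implies finiteness
almost everywhere. -/
lemma ae_coneInt_lt_top_of_exists (hn : 0 < n) (h0 : 0 < α) (h1 : α ≤ 1) {f : Rn n → ℝ}
    (hf : LocallyIntegrable f volume) {x0 : Rn n} (hx0 : coneInt (sqF α f) 1 x0 < ⊤) :
    ∀ᵐ x, coneInt (sqF α f) 1 x < ⊤ := by
  have hloc : ∀ m : ℕ, ∀ᵐ x, coneInt
      (sqF α ((closedBall x0 (3 * ((m : ℝ) + 1))).indicator f)) 1 x < ⊤ := fun m =>
    ae_coneInt_lt_top hn h0 h1 ((integrable_indicator_iff measurableSet_closedBall).2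
      (hf.integrableOn_isCompact (isCompact_closedBall _ _)))
  filter_upwards [ae_all_iff.2 hloc] with x hx
  obtain ⟨m, hm⟩ := exists_nat_gt (dist x x0)
  have hmx := hx m
  set R := (m : ℝ) + 1 with hR
  have hR0 : 0 < R := by positivity
  have hxR : dist x x0 < R := by linarith
  have hsplit := lintegral_inter_add_sdiff (sqF α f)
    {p : Rn n × ℝ | 0 < p.2 ∧ dist x p.1 < 1 * p.2} (μ := volume)
    (measurableSet_lt measurable_const measurable_snd : MeasurableSet {p : Rn n × ℝ | R < p.2})
  rw [coneInt, ← hsplit]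
  refine ENNReal.add_lt_top.2 ⟨(coneInt_high hn h0 h1 hf hR0 hxR).trans_lt
    (ENNReal.mul_lt_top ENNReal.ofReal_lt_top hx0), lt_of_le_of_lt ?_ hmx⟩
  refine le_trans (le_of_eq (setLIntegral_congr_fun ((measurableSet_cone 1 x).diff
    (measurableSet_lt measurable_const measurable_snd)) ?_)) (lintegral_mono_set sdiff_subset)
  rintro ⟨y, t⟩ ⟨⟨ht, hxy⟩, hRt⟩
  simp only [one_mul] at ht hxy
  replace hRt : t ≤ R := not_lt.1 hRt
  rw [sqF_of_pos (by exact ht), sqF_of_pos (by exact ht)]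
  simp only
  rw [Aalpha_congr ht fun z hz => ?_]
  rw [indicator_of_mem]
  rw [mem_closedBall] at hz ⊢
  have h3 := dist_triangle z y x0
  have h4 := dist_triangle y x x0
  rw [dist_comm y x] at h4
  linarith

lemma Salpha_eq (hn : 0 < n) (h0 : 0 < α) (h1 : α ≤ 1) {f : Rn n → ℝ}
    (hf : LocallyIntegrable f volume) (β : ℝ) (x : Rn n) :
    Salpha α β f x = Real.sqrt (coneInt (sqF α f) β x).toReal := by
  rw [Salpha, coneInt]
  congr 1
  have hA := measurable_Aalpha hn h0 h1 hf
  have e : EqOn (fun p : Rn n × ℝ => Aalpha α f p.1 p.2 ^ 2 / p.2 ^ (n + 1))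
      (fun p : Rn n × ℝ => ({p : Rn n × ℝ | 0 < p.2}.indicator (fun p => Aalpha α f p.1 p.2) p) ^ 2 /
        p.2 ^ (n + 1)) {p : Rn n × ℝ | 0 < p.2 ∧ dist x p.1 < β * p.2} := fun p hp => by
    simp only
    rw [indicator_of_mem (by exact hp.1)]
  rw [setIntegral_congr_fun (measurableSet_cone β x) e, sqF_eq, integral_eq_lintegral_of_nonneg_ae]
  · refine (ae_restrict_iff' (measurableSet_cone β x)).2 (ae_of_all _ fun p hp => ?_)
    have := hp.1
    simp only [Pi.zero_apply]
    positivity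
  · have : Measurable fun p : Rn n × ℝ => ({p : Rn n × ℝ | 0 < p.2}.indicator
        (fun p => Aalpha α f p.1 p.2) p) ^ 2 / p.2 ^ (n + 1) := by fun_prop
    exact this.aestronglyMeasurable

lemma enorm_Salpha_rpow (hn : 0 < n) (h0 : 0 < α) (h1 : α ≤ 1) {f : Rn n → ℝ}
    (hf : LocallyIntegrable f volume) (β : ℝ) (x : Rn n) {p : ℝ} :
    ‖Salpha α β f x‖ₑ ^ p = ENNReal.ofReal (coneInt (sqF α f) β x).toReal ^ (p / 2) := by
  rw [Salpha_eq hn h0 h1 hf, Real.enorm_of_nonneg (Real.sqrt_nonneg _), Real.sqrt_eq_rpow,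
    ← ENNReal.ofReal_rpow_of_nonneg ENNReal.toReal_nonneg (by norm_num), ← ENNReal.rpow_mul]
  congr 1; ring

lemma coneInt_mono (F : Rn n × ℝ → ENNReal) {β : ℝ} (hβ : 1 ≤ β) (x : Rn n) :
    coneInt F 1 x ≤ coneInt F β x := by
  refine lintegral_mono_set fun p hp => ⟨hp.1, hp.2.trans_le ?_⟩
  have := hp.1
  gcongr

end global

/-- **Lemma 4.2.** Let `0 < α ≤ 1` and `2 < p < ∞`.  For every `j ∈ ℤ₊`,
`‖S_{α,2ʲ}(f)‖_{L^p} ≤ C ⬝ 2^{jn/2} ‖S_α(f)‖_{L^p}`. -/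
theorem salpha_aperture_Lp_large
    (n : ℕ) (hn : 0 < n) (α p : ℝ) (hα0 : 0 < α) (hα1 : α ≤ 1) (hp : 2 < p) :
    ∃ C : ℝ, 0 < C ∧ ∀ j : ℕ, 1 ≤ j → ∀ f : Rn n → ℝ, LocallyIntegrable f volume →
      eLpNorm (Salpha α (2 ^ j) f) (ENNReal.ofReal p) volume ≤
        ENNReal.ofReal (C * 2 ^ (((j * n : ℕ) : ℝ) / 2)) *
          eLpNorm (Salpha α 1 f) (ENNReal.ofReal p) volume := by
  obtain ⟨C0, hC0, hap⟩ := coneInt_aperture hn (q := p / 2) (by linarith)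
  have hp0 : 0 < p := by linarith
  set c : ℝ := C0.toReal + 1 with hc
  have hc0 : 0 < c := by positivity
  refine ⟨c ^ (1 / 2 : ℝ), by positivity, fun j _ f hf => ?_⟩
  have hβ : (1 : ℝ) ≤ 2 ^ j := one_le_pow₀ one_le_two
  by_cases hex : ∃ x0, coneInt (sqF α f) 1 x0 < ⊤
  · obtain ⟨x0, hx0⟩ := hex
    have hae := ae_coneInt_lt_top_of_exists hn hα0 hα1 hf hx0
    have hpt : ENNReal.ofReal p ≠ 0 := by simpa using hp0
    rw [eLpNorm_eq_lintegral_rpow_enorm_toReal hpt ENNReal.ofReal_ne_top,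
      eLpNorm_eq_lintegral_rpow_enorm_toReal hpt ENNReal.ofReal_ne_top,
      ENNReal.toReal_ofReal hp0.le]
    have e1 : ∫⁻ x, ‖Salpha α 1 f x‖ₑ ^ p = ∫⁻ x, coneInt (sqF α f) 1 x ^ (p / 2) := by
      refine lintegral_congr_ae ?_
      filter_upwards [hae] with x hx
      rw [enorm_Salpha_rpow hn hα0 hα1 hf, ENNReal.ofReal_toReal hx.ne]
    have e2 : ∫⁻ x, ‖Salpha α (2 ^ j) f x‖ₑ ^ p ≤ ∫⁻ x, coneInt (sqF α f) (2 ^ j) x ^ (p / 2) := by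
      refine lintegral_mono fun x => ?_
      simp only
      rw [enorm_Salpha_rpow hn hα0 hα1 hf]
      exact ENNReal.rpow_le_rpow ENNReal.ofReal_toReal_le (by positivity)
    rw [e1]
    calc _ ≤ ((C0 * ENNReal.ofReal ((2 ^ j) ^ n)) ^ (p / 2) *
          ∫⁻ x, coneInt (sqF α f) 1 x ^ (p / 2)) ^ (1 / p) := by
          refine ENNReal.rpow_le_rpow (e2.trans (hap _ (measurable_sqF hn hα0 hα1 hf) _ hβ))
            (by positivity)
      _ = (C0 * ENNReal.ofReal ((2 ^ j) ^ n)) ^ (1 / 2 : ℝ) *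
          (∫⁻ x, coneInt (sqF α f) 1 x ^ (p / 2)) ^ (1 / p) := by
          rw [ENNReal.mul_rpow_of_nonneg _ _ (by positivity), ← ENNReal.rpow_mul]
          congr 2
          field_simp
      _ ≤ _ := by
          gcongr
          calc _ ≤ (ENNReal.ofReal c * ENNReal.ofReal ((2 ^ j) ^ n)) ^ (1 / 2 : ℝ) := by
                gcongr
                exact ENNReal.le_ofReal_iff_toReal_le hC0 hc0.le |>.2 (by linarith)
            _ = _ := by
                rw [← ENNReal.ofReal_mul hc0.le,
                  ENNReal.ofReal_rpow_of_nonneg (by positivity) (by norm_num),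
                  Real.mul_rpow hc0.le (by positivity), ← pow_mul, ← Real.rpow_natCast,
                  ← Real.rpow_mul zero_le_two]
                congr 3; ring
  · -- both integrals diverge at every point, and the Bochner integral then takes the value `0`
    push Not at hex
    have hz : Salpha α (2 ^ j) f = fun _ => 0 := by
      ext x
      rw [Salpha_eq hn hα0 hα1 hf,
        top_le_iff.1 ((hex x).trans (coneInt_mono _ hβ x))]
      simp
    rw [hz, eLpNorm_zero']
    exact zero_le
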